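/- arXiv:1610.05033 — 7 statements merged into one kernel-verified Lean document; each statement's English description precedes it below -/
import Mathlib

section
/- The kernel of the k-algebra homomorphism from the polynomial ring k[X,Y] to the product ring k[t] × k[t] × k[t] × k[t] determined by X ↦ (t, 0, t, λt) and Y ↦ (0, t, t, t) is the principal ideal generated by F = XY(X−Y)(X−λY). -/
/-!
The branches of the curve are four lines through the origin. The parametrization of the line in
direction `(a, b)` has kernel generated by the linear form `b X - a Y`, because it has a section
modulo that form. Restricted to the line in direction `(c, d)`, the form becomes `(b c - a d) t`,
which is regular when the two directions are independent, so the forms of distinct lines can be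
divided out one after the other.
-/

open scoped Polynomial nonZeroDivisors

theorem neg_mem_nonZeroDivisors_iff {R : Type*} [Ring R] {x : R} : -x ∈ R⁰ ↔ x ∈ R⁰ := by
  simp only [mem_nonZeroDivisors_iff, mul_neg, neg_mul, neg_eq_zero]

section KernelIntersections

variable {ι A : Type*} [CommSemiring A]

theorem ker_inf_span_singleton {B : Type*} [Semiring B] (φ : A →+* B) {g : A} (hg : φ g ∈ B⁰) :
    RingHom.ker φ ⊓ Ideal.span {g} = RingHom.ker φ * Ideal.span {g} := by
  refine le_antisymm ?_ Ideal.mul_le_inf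
  rintro x ⟨hx, hgx⟩
  obtain ⟨q, rfl⟩ := Ideal.mem_span_singleton'.mp hgx
  have hq : φ q = 0 := mul_right_mem_nonZeroDivisors_eq_zero_iff hg |>.mp (map_mul φ q g ▸ hx)
  exact Ideal.mul_mem_mul hq (Ideal.mem_span_singleton_self g)

variable {B : ι → Type*} [∀ i, CommSemiring (B i)]

theorem iInf_ker_eq_span_prod {φ : ∀ i, A →+* B i} {f : ι → A}
    (hker : ∀ i, RingHom.ker (φ i) = Ideal.span {f i})
    (hreg : Pairwise fun i j ↦ φ i (f j) ∈ (B i)⁰) (s : Finset ι) :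
    ⨅ i ∈ s, RingHom.ker (φ i) = Ideal.span {∏ i ∈ s, f i} := by
  classical
  induction s using Finset.induction_on with
  | empty => simp
  | insert i s hi ih =>
    have hprod : φ i (∏ j ∈ s, f j) ∈ (B i)⁰ := by
      rw [map_prod]
      exact prod_mem fun j hj ↦ hreg (ne_of_mem_of_not_mem hj hi).symm
    rw [Finset.iInf_insert, ih, ker_inf_span_singleton (φ i) hprod, hker,
      Ideal.span_singleton_mul_span_singleton, Finset.prod_insert hi]

theorem ker_pi_eq_span_prod [Fintype ι] {φ : ∀ i, A →+* B i} {f : ι → A}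
    (hker : ∀ i, RingHom.ker (φ i) = Ideal.span {f i})
    (hreg : Pairwise fun i j ↦ φ i (f j) ∈ (B i)⁰) :
    RingHom.ker (RingHom.pi φ) = Ideal.span {∏ i, f i} := by
  rw [Pi.ker_ringHom, ← iInf_ker_eq_span_prod hker hreg]
  simp only [Finset.mem_univ, iInf_pos]

end KernelIntersections

section Lines

open MvPolynomial

variable {R : Type*} [CommRing R]

theorem ker_le_of_forall_X_sub_mem {σ B : Type*} [Semiring B] [Algebra R B]
    (φ : MvPolynomial σ R →ₐ[R] B) (ψ : B →ₐ[R] MvPolynomial σ R) {I : Ideal (MvPolynomial σ R)}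
    (hI : ∀ i, X i - ψ (φ (X i)) ∈ I) : RingHom.ker φ ≤ I := by
  intro p hp
  have hmk : Ideal.Quotient.mkₐ R I = (Ideal.Quotient.mkₐ R I).comp (ψ.comp φ) :=
    algHom_ext fun i ↦ Ideal.Quotient.eq.mpr (hI i)
  have hmkp : Ideal.Quotient.mk I p = Ideal.Quotient.mk I (ψ (φ p)) := DFunLike.congr_fun hmk p
  rwa [RingHom.mem_ker.mp hp, map_zero, map_zero, Ideal.Quotient.eq_zero_iff_mem] at hmkp

/-- Restriction of polynomial functions on the plane to the line `t ↦ (a t, b t)`. -/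
noncomputable def lineRestriction (a b : R) : MvPolynomial (Fin 2) R →ₐ[R] R[X] :=
  aeval ![Polynomial.C a * Polynomial.X, Polynomial.C b * Polynomial.X]

/-- The linear form `b X - a Y`, an equation of the line through the origin in direction
`(a, b)`. -/
noncomputable def lineForm (a b : R) : MvPolynomial (Fin 2) R :=
  C b * X 0 - C a * X 1

theorem lineRestriction_lineForm (a b c d : R) :
    lineRestriction a b (lineForm c d) = Polynomial.C (a * d - b * c) * Polynomial.X := by
  simp only [lineRestriction, lineForm, map_sub, map_mul, aeval_X, algHom_C,
    Polynomial.algebraMap_eq, Matrix.cons_val_zero, Matrix.cons_val_one]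
  ring

theorem lineRestriction_lineForm_mem_nonZeroDivisors {a b c d : R} (h : a * d - b * c ∈ R⁰) :
    lineRestriction a b (lineForm c d) ∈ R[X]⁰ := by
  rw [lineRestriction_lineForm]
  exact Polynomial.mem_nonzeroDivisors_of_coeff_mem 1 (by simpa using h)

theorem ker_lineRestriction {a b : R} (h : IsCoprime a b) :
    RingHom.ker (lineRestriction a b) = Ideal.span {lineForm a b} := by
  obtain ⟨u, v, huv⟩ := h
  have hC : C u * C a + C v * C b = (1 : MvPolynomial (Fin 2) R) := by
    simp only [← map_mul, ← map_add, huv, map_one]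
  apply le_antisymm
  · -- `u X + v Y` restricts to the coordinate `t`, so `t ↦ u X + v Y` is a section.
    refine ker_le_of_forall_X_sub_mem _ (Polynomial.aeval (C u * X 0 + C v * X 1)) fun i ↦ ?_
    rw [Ideal.mem_span_singleton]
    fin_cases i <;>
      simp only [lineRestriction, lineForm, aeval_X, map_mul, Polynomial.aeval_C,
        Polynomial.aeval_X, algebraMap_eq, Fin.zero_eta, Fin.mk_one, Matrix.cons_val_zero,
        Matrix.cons_val_one]
    · exact ⟨C v, by linear_combination -X 0 * hC⟩
    · exact ⟨-C u, by linear_combination -X 1 * hC⟩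
  · rw [Ideal.span_singleton_le_iff_mem, RingHom.mem_ker, lineRestriction_lineForm,
      mul_comm b a, sub_self, map_zero, zero_mul]

theorem ker_pi_lineRestriction {ι : Type*} [Fintype ι] {a b : ι → R}
    (hline : ∀ i, IsCoprime (a i) (b i))
    (hdet : Pairwise fun i j ↦ a i * b j - b i * a j ∈ R⁰) :
    RingHom.ker (AlgHom.pi fun i ↦ lineRestriction (a i) (b i)) =
      Ideal.span {∏ i, lineForm (a i) (b i)} :=
  ker_pi_eq_span_prod (φ := fun i ↦ (lineRestriction (a i) (b i)).toRingHom)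
    (fun i ↦ ker_lineRestriction (hline i))
    fun _ _ hij ↦ lineRestriction_lineForm_mem_nonZeroDivisors (hdet hij)

end Lines

theorem stmt_0_general {R : Type*} [CommRing R] {lam : R} (h0 : lam ∈ R⁰) (h1 : lam - 1 ∈ R⁰) :
    RingHom.ker (MvPolynomial.aeval
      (![![Polynomial.X, 0, Polynomial.X, Polynomial.C lam * Polynomial.X],
         ![0, Polynomial.X, Polynomial.X, Polynomial.X]] :
        Fin 2 → Fin 4 → Polynomial R))
      = Ideal.span {(MvPolynomial.X 0 * MvPolynomial.X 1 *
          (MvPolynomial.X 0 - MvPolynomial.X 1) *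
          (MvPolynomial.X 0 - MvPolynomial.C lam * MvPolynomial.X 1) :
          MvPolynomial (Fin 2) R)} := by
  let a : Fin 4 → R := ![1, 0, 1, lam]
  let b : Fin 4 → R := ![0, 1, 1, 1]
  have hline : ∀ i, IsCoprime (a i) (b i) := by
    intro i
    fin_cases i <;> simp [a, b, isCoprime_one_left, isCoprime_one_right]
  have hdet : Pairwise fun i j ↦ a i * b j - b i * a j ∈ R⁰ := by
    intro i j hij
    have h_neg : 1 - lam ∈ R⁰ := by rwa [← neg_mem_nonZeroDivisors_iff, neg_sub]
    fin_cases i <;> fin_cases j <;> simp_all [a, b, neg_mem_nonZeroDivisors_iff]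
  have hmap : MvPolynomial.aeval
      (![![Polynomial.X, 0, Polynomial.X, Polynomial.C lam * Polynomial.X],
         ![0, Polynomial.X, Polynomial.X, Polynomial.X]] : Fin 2 → Fin 4 → Polynomial R) =
      AlgHom.pi fun i ↦ lineRestriction (a i) (b i) := by
    ext i j : 2
    fin_cases i <;> fin_cases j <;> simp [a, b, lineRestriction]
  have hprod : ∏ i, lineForm (a i) (b i) =
      -(MvPolynomial.X 0 * MvPolynomial.X 1 * (MvPolynomial.X 0 - MvPolynomial.X 1) *
          (MvPolynomial.X 0 - MvPolynomial.C lam * MvPolynomial.X 1)) := by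
    simp only [a, b, lineForm, Fin.prod_univ_four, Matrix.cons_val, MvPolynomial.C_0,
      MvPolynomial.C_1]
    ring
  rw [hmap, ker_pi_lineRestriction hline hdet, hprod, Ideal.span_singleton_neg]

/-- The kernel of the `k`-algebra homomorphism `k[X,Y] → k[t] × k[t] × k[t] × k[t]`
determined by `X ↦ (t, 0, t, λt)` and `Y ↦ (0, t, t, t)` is the principal ideal
generated by `F = XY(X−Y)(X−λY)`. -/
theorem stmt_0 {k : Type*} [Field k] (lam : k) (h0 : lam ≠ 0) (h1 : lam ≠ 1) :
    RingHom.ker (MvPolynomial.aeval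
      (![![Polynomial.X, 0, Polynomial.X, Polynomial.C lam * Polynomial.X],
         ![0, Polynomial.X, Polynomial.X, Polynomial.X]] :
        Fin 2 → Fin 4 → Polynomial k))
      = Ideal.span {(MvPolynomial.X 0 * MvPolynomial.X 1 *
          (MvPolynomial.X 0 - MvPolynomial.X 1) *
          (MvPolynomial.X 0 - MvPolynomial.C lam * MvPolynomial.X 1) :
          MvPolynomial (Fin 2) k)} :=
  stmt_0_general (mem_nonZeroDivisors_of_ne_zero h0)
    (mem_nonZeroDivisors_of_ne_zero (sub_ne_zero.mpr h1))
end

section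
/- The quotient k-algebra k[X,Y]/(XY, (X−Y)(X−λY)) is a k-vector space of dimension 4. -/
/-! Modulo `XY`, the product `(X - Y)(X - λY)` is `X² + λY²`. In the quotient, `x² = -λy²`
together with `xy = 0` gives `λy³ = 0`, so `1, x, y, y²` span once `λ` is a unit. They are
independent because the coefficients of `1`, `X`, `Y` and the combination
(coefficient of `Y²`) - `λ` (coefficient of `X²`) all vanish on the ideal. -/

section Generators

variable {R A : Type*}

theorem adjoin_toSubmodule_le_of_mul_mem [CommSemiring R] [Semiring A] [Algebra R A] {s : Set A}
    {M : Submodule R A} (one_mem : 1 ∈ M) (mul_mem : ∀ a ∈ M, ∀ b ∈ s, a * b ∈ M) :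
    Subalgebra.toSubmodule (Algebra.adjoin R s) ≤ M := by
  rw [Algebra.adjoin_toSubmodule_le]
  intro a ha
  induction ha using Submonoid.closure_induction_right with
  | one => exact one_mem
  | mul_right a _ b hb ha => exact mul_mem a ha b hb

variable [CommRing R] [CommRing A] [Algebra R A] {c : R} {x y : A}

theorem pow_three_eq_zero_of_sq_add_smul_sq (hc : IsUnit c) (hxy : x * y = 0)
    (hsq : x ^ 2 + c • y ^ 2 = 0) : y ^ 3 = 0 := by
  rw [← hc.smul_eq_zero]
  calc c • y ^ 3 = (x ^ 2 + c • y ^ 2) * y - x * (x * y) := by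
        simp only [Algebra.smul_def]
        ring
    _ = 0 := by rw [hsq, hxy, zero_mul, mul_zero, sub_zero]

theorem span_one_x_y_sq_eq_top (hc : IsUnit c) (hxy : x * y = 0)
    (hsq : x ^ 2 + c • y ^ 2 = 0) (hgen : Algebra.adjoin R {x, y} = ⊤) :
    Submodule.span R (Set.range ![1, x, y, y ^ 2]) = ⊤ := by
  set M := Submodule.span R (Set.range ![1, x, y, y ^ 2])
  have generator_mem (i : Fin 4) : ![1, x, y, y ^ 2] i ∈ M := Submodule.subset_span ⟨i, rfl⟩
  have mul_x_mem (i : Fin 4) : ![1, x, y, y ^ 2] i * x ∈ M := by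
    fin_cases i
    · simpa using generator_mem 1
    · have hxx : x * x = -c • y ^ 2 := by
        rw [neg_smul, ← pow_two]
        exact eq_neg_of_add_eq_zero_left hsq
      simpa [hxx] using M.smul_mem (-c) (generator_mem 3)
    · simp [mul_comm y x, hxy]
    · simp [pow_two, mul_assoc, mul_comm y x, hxy]
  have mul_y_mem (i : Fin 4) : ![1, x, y, y ^ 2] i * y ∈ M := by
    fin_cases i
    · simpa using generator_mem 2
    · simp [hxy]
    · simpa [pow_two] using generator_mem 3
    · simp [← pow_succ, pow_three_eq_zero_of_sq_add_smul_sq hc hxy hsq]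
  have le_comap {b : A} (hb : ∀ i, ![1, x, y, y ^ 2] i * b ∈ M) :
      M ≤ M.comap (LinearMap.mulRight R b) :=
    Submodule.span_le.2 (Set.range_subset_iff.2 hb)
  rw [eq_top_iff, ← Algebra.top_toSubmodule, ← hgen]
  refine adjoin_toSubmodule_le_of_mul_mem (generator_mem 0) fun a ha b hb ↦ ?_
  obtain rfl | rfl := hb
  · exact le_comap mul_x_mem ha
  · exact le_comap mul_y_mem ha

end Generators

section Quotient

open MvPolynomial

variable {R : Type*} [CommRing R]

/-- The ideal `(XY, X² + cY²)` of `R[X,Y]`, a normal form of `(XY, (X - Y)(X - cY))`, with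
`X = X 0` and `Y = X 1`. -/
noncomputable def crossConicIdeal (c : R) : Ideal (MvPolynomial (Fin 2) R) :=
  Ideal.span {X 0 * X 1, X 0 ^ 2 + C c * X 1 ^ 2}

theorem span_mul_lines_eq_crossConicIdeal (c : R) :
    Ideal.span {(X 0 * X 1 : MvPolynomial (Fin 2) R), (X 0 - X 1) * (X 0 - C c * X 1)} =
      crossConicIdeal c := by
  have expand : ((X 0 - X 1) * (X 0 - C c * X 1) : MvPolynomial (Fin 2) R) =
      (X 0 ^ 2 + C c * X 1 ^ 2) + -(1 + C c) * (X 0 * X 1) := by ring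
  rw [expand, Ideal.span_pair_add_mul_left, crossConicIdeal]

/-- The coordinates of a polynomial modulo `(XY, X² + cY²)` with respect to `1, X, Y, Y²`. The last
one accounts for the reduction of `X²` to `-cY²`. -/
noncomputable def crossConicCoords (c : R) : MvPolynomial (Fin 2) R →ₗ[R] (Fin 4 → R) :=
  LinearMap.pi ![lcoeff R 0, lcoeff R (Finsupp.single 0 1), lcoeff R (Finsupp.single 1 1),
    lcoeff R (Finsupp.single 1 2) - c • lcoeff R (Finsupp.single 0 2)]

theorem crossConicCoords_mul_X_mul_X (c : R) (p : MvPolynomial (Fin 2) R) :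
    crossConicCoords c (p * (X 0 * X 1)) = 0 := by
  rw [← mul_assoc]
  ext i
  fin_cases i <;> simp [crossConicCoords, coeff_mul_X']

theorem crossConicCoords_mul_sq_add_sq (c : R) (p : MvPolynomial (Fin 2) R) :
    crossConicCoords c (p * (X 0 ^ 2 + C c * X 1 ^ 2)) = 0 := by
  have expand : p * (X 0 ^ 2 + C c * X 1 ^ 2) = p * X 0 * X 0 + C c * (p * X 1 * X 1) := by ring
  rw [expand]
  ext i
  fin_cases i <;>
    simp [crossConicCoords, coeff_mul_X', coeff_C_mul, ← Finsupp.single_tsub]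

theorem crossConicIdeal_le_ker_crossConicCoords (c : R) :
    (crossConicIdeal c).restrictScalars R ≤ LinearMap.ker (crossConicCoords c) := by
  intro p hp
  obtain ⟨u, v, rfl⟩ := Ideal.mem_span_pair.1 hp
  rw [LinearMap.mem_ker, map_add, crossConicCoords_mul_X_mul_X, crossConicCoords_mul_sq_add_sq,
    add_zero]

theorem crossConicCoords_one_X_X_sq (c : R) (i : Fin 4) :
    crossConicCoords c (![1, X 0, X 1, X 1 ^ 2] i) = Pi.single i 1 := by
  ext j
  fin_cases i <;> fin_cases j <;>
    simp [crossConicCoords, coeff_one, coeff_X, coeff_X_pow, Finsupp.single_eq_single_iff,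
      eq_comm (a := (0 : Fin 2 →₀ ℕ))]

theorem linearIndependent_mk_crossConicIdeal (c : R) :
    LinearIndependent R fun i ↦
      Ideal.Quotient.mk (crossConicIdeal c) (![1, X 0, X 1, X 1 ^ 2] i) := by
  let coords : (MvPolynomial (Fin 2) R ⧸ crossConicIdeal c) →ₗ[R] (Fin 4 → R) :=
    ((crossConicIdeal c).restrictScalars R).liftQ (crossConicCoords c)
        (crossConicIdeal_le_ker_crossConicCoords c) ∘ₗ
      (Submodule.Quotient.restrictScalarsEquiv R (crossConicIdeal c)).symm.toLinearMap
  have coords_mk (i : Fin 4) :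
      coords (Ideal.Quotient.mk _ (![1, X 0, X 1, X 1 ^ 2] i)) = Pi.single i 1 :=
    crossConicCoords_one_X_X_sq c i
  refine .of_comp coords ?_
  convert! Pi.linearIndependent_single_one (Fin 4) R using 2 with i
  exact coords_mk i

theorem adjoin_range_mk_X_eq_top {σ : Type*} (I : Ideal (MvPolynomial σ R)) :
    Algebra.adjoin R (Set.range fun i ↦ Ideal.Quotient.mk I (X i)) = ⊤ := by
  have map_top : (⊤ : Subalgebra R (MvPolynomial σ R)).map (Ideal.Quotient.mkₐ R I) = ⊤ := by
    rw [Algebra.map_top, AlgHom.range_eq_top]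
    exact Ideal.Quotient.mkₐ_surjective R I
  rw [← map_top, ← adjoin_range_X, AlgHom.map_adjoin, ← Set.range_comp]
  rfl

theorem span_mk_crossConicIdeal_eq_top {c : R} (hc : IsUnit c) :
    Submodule.span R (Set.range fun i ↦
      Ideal.Quotient.mk (crossConicIdeal c) (![1, X 0, X 1, X 1 ^ 2] i)) = ⊤ := by
  set π := Ideal.Quotient.mk (crossConicIdeal c)
  have hxy : π (X 0) * π (X 1) = 0 := by
    rw [← map_mul]
    exact Ideal.Quotient.eq_zero_iff_mem.2 (Ideal.subset_span (by simp))
  have hsq : π (X 0) ^ 2 + c • π (X 1) ^ 2 = 0 := by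
    have smul_eq : c • π (X 1) ^ 2 = π (C c * X 1 ^ 2) := by
      rw [← smul_eq_C_mul, ← map_pow]
      rfl
    rw [smul_eq, ← map_pow, ← map_add]
    exact Ideal.Quotient.eq_zero_iff_mem.2 (Ideal.subset_span (by simp))
  have hgen : Algebra.adjoin R {π (X 0), π (X 1)} = ⊤ := by
    rw [← adjoin_range_mk_X_eq_top (crossConicIdeal c)]
    congr 1
    ext a
    simp [π, eq_comm]
  convert! span_one_x_y_sq_eq_top hc hxy hsq hgen using 3
  ext i
  fin_cases i <;> simp

/-- The basis `1, x, y, y²` of `R[X,Y]/(XY, X² + cY²)`, for a unit `c`. -/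
noncomputable def crossConicBasis {c : R} (hc : IsUnit c) :
    Module.Basis (Fin 4) R (MvPolynomial (Fin 2) R ⧸ crossConicIdeal c) :=
  .mk (linearIndependent_mk_crossConicIdeal c) (span_mk_crossConicIdeal_eq_top hc).ge

theorem stmt_4_general [Nontrivial R] {c : R} (hc : IsUnit c) :
    Module.finrank R (MvPolynomial (Fin 2) R ⧸
      Ideal.span {(X 0 * X 1 : MvPolynomial (Fin 2) R), (X 0 - X 1) * (X 0 - C c * X 1)}) = 4 := by
  rw [span_mul_lines_eq_crossConicIdeal, Module.finrank_eq_card_basis (crossConicBasis hc),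
    Fintype.card_fin]

end Quotient

/-- The quotient `k`-algebra `k[X,Y]/(XY, (X−Y)(X−λY))` is a `k`-vector space of
dimension 4. -/
theorem stmt_4 {k : Type*} [Field k] (lam : k) (h0 : lam ≠ 0) (h1 : lam ≠ 1) :
    Module.finrank k (MvPolynomial (Fin 2) k ⧸
      Ideal.span {(MvPolynomial.X 0 * MvPolynomial.X 1 : MvPolynomial (Fin 2) k),
        (MvPolynomial.X 0 - MvPolynomial.X 1) *
          (MvPolynomial.X 0 - MvPolynomial.C lam * MvPolynomial.X 1)}) = 4 :=
  stmt_4_general h0.isUnit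
end

section
/- Let R = k[X,Y]/(F), and let R₁ = R/(z₁R) and R₃ = R/(z₃R) (quotients by the images of z₁ = Y and z₃ = X − Y). Then the R-module Ext¹_R(R₁, R₃) is a 1-dimensional k-vector space. -/
open CategoryTheory

/-!
If `y` and `w` annihilate exactly each other's multiples in a commutative ring `R`, the 2-periodic
complex `⋯ → R → R → R` with differentials alternately `w` and `y` resolves `R / y`. Applying
`Hom(-, N)` turns it into `N → N → N → ⋯` with maps `y, w, y, …`, so that the odd `Ext` modules of
`R / y` into an `N` killed by `w` are all `N / y N`. On the curve `F = a b c` in the plane the pair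
`y = a`, `w = b c` is of this kind, and `N = R / b` is killed by `w`; hence
`Ext¹(R / a, R / b) = k[X, Y] / (a, b)`, whose dimension is the intersection number of the two
components. For two distinct lines through the origin it is `k[X, Y] / (X, Y) = k`.
-/

universe u v

section General

/-- The homology of `X₁ → X₂ → X₃` with zero second map, as a quotient of `X₂`. -/
noncomputable def homologyEquivQuotientRange {k : Type v} [Ring k]
    (S : ShortComplex (ModuleCat.{u} k)) (hg : S.g = 0) :
    S.homology ≃ₗ[k] S.X₂ ⧸ LinearMap.range S.f.hom :=
  (ShortComplex.LeftHomologyData.ofIsColimitCokernelCofork S hg _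
    (ModuleCat.cokernelIsColimit S.f)).homologyIso.toLinearEquiv

open scoped ModuleCat.Algebra

variable (k : Type v) [CommRing k] {R : Type u} [CommRing R] [Algebra k R]
  (N : Type u) [AddCommGroup N] [Module R N] [Module k N] [IsScalarTower k R N]

variable (R) in
/-- Evaluation at `1`, identifying `Hom_R(R, N)` with `N`. The domain is written through
`linearYoneda` because the `k`-module structure found on the bare `Hom` type is induced from that of
`N`, while the one entering `Ext` is the one of the `k`-linear category `ModuleCat R`. -/
noncomputable def linearYonedaObjSelfEquiv :
    ((linearYoneda k (ModuleCat.{u} R)).obj (ModuleCat.of R N)).obj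
      (Opposite.op (ModuleCat.of R R)) ≃ₗ[k] N where
  __ := (ModuleCat.homAddEquiv (M := ModuleCat.of R R) (N := ModuleCat.of R N)).trans
    (LinearMap.ringLmapEquivSelf R ℕ N).toAddEquiv
  map_smul' c f := algebraMap_smul R c (f.hom (1 : R))

theorem linearYonedaObjSelfEquiv_smul_id_comp (r : R) (f : ModuleCat.of R R ⟶ ModuleCat.of R N) :
    linearYonedaObjSelfEquiv k R N ((r • 𝟙 (ModuleCat.of R R)) ≫ f) =
      r • linearYonedaObjSelfEquiv k R N f := by
  rw [Linear.smul_comp, Category.id_comp]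
  rfl

open scoped Pointwise in
theorem range_lsmul_eq_restrictScalars (r : R) :
    LinearMap.range (Algebra.lsmul k k N r) = (r • (⊤ : Submodule R N)).restrictScalars k := by
  ext x
  simp [Submodule.mem_smul_pointwise_iff_exists]

end General

/-- Two elements of a commutative ring form an exact pair (of zero divisors) if each generates the
annihilator of the other. -/
structure IsExactPair {R : Type u} [CommRing R] (y w : R) : Prop where
  mul_left_eq_zero_iff (r : R) : y * r = 0 ↔ w ∣ r
  mul_right_eq_zero_iff (r : R) : w * r = 0 ↔ y ∣ r

namespace IsExactPair

variable {R : Type u} [CommRing R] {y w : R}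

theorem symm (h : IsExactPair y w) : IsExactPair w y :=
  ⟨h.mul_right_eq_zero_iff, h.mul_left_eq_zero_iff⟩

theorem mul_eq_zero (h : IsExactPair y w) : y * w = 0 :=
  (h.mul_left_eq_zero_iff w).2 dvd_rfl

theorem of_isRegular {P : Type u} [CommRing P] {a c : P} (ha : IsRegular a) (hc : IsRegular c) :
    IsExactPair (Ideal.Quotient.mk (Ideal.span {a * c}) a) (Ideal.Quotient.mk _ c) := by
  have mk_mul_eq_zero_iff {a c : P} (ha : IsRegular a) (r : P ⧸ Ideal.span {a * c}) :
      Ideal.Quotient.mk _ a * r = 0 ↔ Ideal.Quotient.mk _ c ∣ r := by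
    obtain ⟨p, rfl⟩ := Ideal.Quotient.mk_surjective r
    constructor
    · rw [← map_mul, Ideal.Quotient.eq_zero_iff_dvd]
      exact fun h ↦ map_dvd _ (ha.left.dvd_cancel_left.1 h)
    · rintro ⟨s, hs⟩
      rw [hs, ← mul_assoc, ← map_mul, (Ideal.Quotient.eq_zero_iff_dvd _ _).2 dvd_rfl, zero_mul]
  exact ⟨mk_mul_eq_zero_iff ha, by rw [mul_comm a c]; exact mk_mul_eq_zero_iff hc⟩

theorem smul_id_comp_smul_id (h : IsExactPair y w) (M : ModuleCat.{v} R) :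
    (y • 𝟙 M) ≫ (w • 𝟙 M) = 0 := by
  rw [Linear.smul_comp, Category.id_comp, smul_smul, h.mul_eq_zero, zero_smul]

theorem exact_smul_id (h : IsExactPair y w) :
    (ShortComplex.mk _ _ (h.smul_id_comp_smul_id (ModuleCat.of R R))).Exact := by
  rw [ShortComplex.moduleCat_exact_iff]
  intro (r : R) (hr : w * r = 0)
  obtain ⟨s, rfl⟩ := (h.mul_right_eq_zero_iff r).1 hr
  exact ⟨s, rfl⟩

/-- The periodic complex `⋯ → R → R → R` with differential `y` out of odd degrees and `w` out of
positive even degrees. -/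
noncomputable abbrev complex (h : IsExactPair y w) : ChainComplex (ModuleCat.{u} R) ℕ :=
  HomologicalComplex.alternatingConst (ModuleCat.of R R)
    (h.symm.smul_id_comp_smul_id _) (h.smul_id_comp_smul_id _)
    fun _ _ ↦ ComplexShape.down_nat_odd_add

theorem complex_d_of_even (h : IsExactPair y w) {n : ℕ} (hn : Even n) :
    h.complex.d (n + 1) n = y • 𝟙 (ModuleCat.of R R) :=
  (if_pos rfl).trans (if_neg (Nat.not_even_iff_odd.2 hn.add_one))

theorem complex_d_of_odd (h : IsExactPair y w) {n : ℕ} (hn : Odd n) :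
    h.complex.d (n + 1) n = w • 𝟙 (ModuleCat.of R R) :=
  (if_pos rfl).trans (if_pos hn.add_one)

theorem complex_exactAt_succ (h : IsExactPair y w) (n : ℕ) : h.complex.ExactAt (n + 1) := by
  rw [h.complex.exactAt_iff' (n + 2) (n + 1) n (by simp) (by simp)]
  obtain hn | hn := (n + 1).even_or_odd
  · exact ShortComplex.exact_of_iso (HomologicalComplex.alternatingConstScIsoEven _ _ _ _
      (by simp) (by simp) hn).symm h.exact_smul_id
  · exact ShortComplex.exact_of_iso (HomologicalComplex.alternatingConstScIsoOdd _ _ _ _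
      (by simp) (by simp) hn).symm h.symm.exact_smul_id

/-- The augmentation of `IsExactPair.complex` by the quotient map `R → R / y`. -/
noncomputable def augmentation (h : IsExactPair y w) :
    h.complex ⟶ (ChainComplex.single₀ _).obj (ModuleCat.of R (R ⧸ Ideal.span {y})) :=
  (h.complex.toSingle₀Equiv _).symm
    ⟨ModuleCat.ofHom (Submodule.mkQ _), by
      rw [h.complex_d_of_even .zero]
      ext
      change Ideal.Quotient.mk (Ideal.span {y}) (y * 1) = 0
      rw [Ideal.Quotient.eq_zero_iff_dvd, mul_one]⟩

theorem augmentation_f_zero (h : IsExactPair y w) :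
    h.augmentation.f 0 = ModuleCat.ofHom (Submodule.mkQ _) :=
  ChainComplex.toSingle₀Equiv_symm_apply_f_zero _ _

theorem quasiIso_augmentation (h : IsExactPair y w) : QuasiIso h.augmentation where
  quasiIsoAt m := by
    cases m with
    | zero =>
      rw [ChainComplex.quasiIsoAt₀_iff, ShortComplex.quasiIso_iff_of_zeros' _ rfl rfl rfl]
      constructor
      · rw [ShortComplex.moduleCat_exact_iff]
        intro (r : R) (hr : h.augmentation.f 0 r = 0)
        rw [h.augmentation_f_zero] at hr
        obtain ⟨s, rfl⟩ := (Ideal.Quotient.eq_zero_iff_dvd _ _).1 hr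
        exact ⟨s, congr($(h.complex_d_of_even .zero) s)⟩
      · change Epi (h.augmentation.f 0)
        rw [h.augmentation_f_zero]
        exact (ModuleCat.epi_iff_surjective _).2 (Submodule.mkQ_surjective _)
    | succ n =>
      rw [quasiIsoAt_iff_exactAt' (hL := ChainComplex.exactAt_succ_single_obj ..)]
      exact h.complex_exactAt_succ n

/-- The periodic free resolution of `R / y` attached to an exact pair `(y, w)`. -/
noncomputable def resolution (h : IsExactPair y w) :
    ProjectiveResolution (ModuleCat.of R (R ⧸ Ideal.span {y})) where
  complex := h.complex
  projective _ := inferInstanceAs (Projective (ModuleCat.of R R))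
  π := h.augmentation
  quasiIso := h.quasiIso_augmentation

section Ext

open scoped ModuleCat.Algebra

variable (k : Type v) [CommRing k] [Algebra k R]
  (N : Type u) [AddCommGroup N] [Module R N] [Module k N] [IsScalarTower k R N]

/-- The complex `N → N → N` of `k`-modules given by multiplication by `y` and then by `w`. -/
noncomputable def smulShortComplex (h : IsExactPair y w) : ShortComplex (ModuleCat k) where
  X₁ := ModuleCat.of k N
  X₂ := ModuleCat.of k N
  X₃ := ModuleCat.of k N
  f := ModuleCat.ofHom (Algebra.lsmul k k N y)
  g := ModuleCat.ofHom (Algebra.lsmul k k N w)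
  zero := by
    rw [← ModuleCat.ofHom_comp, ← Module.End.mul_eq_comp, ← map_mul, h.symm.mul_eq_zero, map_zero,
      ModuleCat.ofHom_zero]

/-- Applying `Hom(-, N)` to the periodic resolution gives multiplication by `y` and `w` on `N`. -/
noncomputable def linearYonedaIsoSmulShortComplex (h : IsExactPair y w) {n : ℕ} (hn : Even n) :
    (h.complex.linearYonedaObj k (ModuleCat.of R N)).sc' n (n + 1) (n + 2) ≅
      h.smulShortComplex k N :=
  let e := (linearYonedaObjSelfEquiv k R N).toModuleIso
  ShortComplex.isoMk e e e
    (by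
      ext (f : ModuleCat.of R R ⟶ ModuleCat.of R N)
      change y • linearYonedaObjSelfEquiv k R N f =
        linearYonedaObjSelfEquiv k R N (h.complex.d (n + 1) n ≫ f)
      rw [h.complex_d_of_even hn]
      exact (linearYonedaObjSelfEquiv_smul_id_comp k N y f).symm)
    (by
      ext (f : ModuleCat.of R R ⟶ ModuleCat.of R N)
      change w • linearYonedaObjSelfEquiv k R N f =
        linearYonedaObjSelfEquiv k R N (h.complex.d (n + 2) (n + 1) ≫ f)
      rw [h.complex_d_of_odd hn.add_one]
      exact (linearYonedaObjSelfEquiv_smul_id_comp k N w f).symm)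

/-- The odd `Ext` modules of `R / y` as homology of `N → N → N`. -/
noncomputable def extIsoHomology (h : IsExactPair y w) {n : ℕ} (hn : Even n) :
    ((Ext k (ModuleCat R) (n + 1)).obj
        (Opposite.op (ModuleCat.of R (R ⧸ Ideal.span {y})))).obj (ModuleCat.of R N) ≅
      (h.smulShortComplex k N).homology :=
  h.resolution.isoExt (n + 1) _ ≪≫ ShortComplex.homologyMapIso
    (HomologicalComplex.isoSc' _ n (n + 1) (n + 2) (by simp) (by simp) ≪≫
      h.linearYonedaIsoSmulShortComplex k N hn)

variable {N} in
/-- The homology of `N → N → N` when `w` kills `N`, so that the second map vanishes. -/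
noncomputable def homologySmulShortComplexEquiv (h : IsExactPair y w)
    (hN : Module.IsTorsionBy R N w) :
    (h.smulShortComplex k N).homology ≃ₗ[k] QuotSMulTop y N :=
  have g_eq_zero : (h.smulShortComplex k N).g = 0 :=
    ModuleCat.hom_ext (LinearMap.ext fun x ↦ hN (x := x))
  homologyEquivQuotientRange _ g_eq_zero ≪≫ₗ
    (Submodule.quotEquivOfEq _ _ (range_lsmul_eq_restrictScalars k N y) :
      (N ⧸ LinearMap.range (Algebra.lsmul k k N y)) ≃ₗ[k] _) ≪≫ₗ
    Submodule.Quotient.restrictScalarsEquiv k _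

variable {N} in
/-- The odd `Ext` modules of `R / y` into a module killed by `w`. -/
noncomputable def extEquivQuotSMulTop (h : IsExactPair y w) (hN : Module.IsTorsionBy R N w) {n : ℕ}
    (hn : Even n) :
    ((Ext k (ModuleCat R) (n + 1)).obj
        (Opposite.op (ModuleCat.of R (R ⧸ Ideal.span {y})))).obj (ModuleCat.of R N) ≃ₗ[k]
      QuotSMulTop y N :=
  (h.extIsoHomology k N hn).toLinearEquiv ≪≫ₗ h.homologySmulShortComplexEquiv k hN

end Ext

end IsExactPair

section Quotient

variable {R : Type*} [CommRing R]

open scoped Pointwise in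
theorem smul_top_quotient_eq_map_mkQ (J : Ideal R) (y : R) :
    y • (⊤ : Submodule R (R ⧸ J)) = Submodule.map J.mkQ (Ideal.span {y}) := by
  rw [← Submodule.range_mkQ J, LinearMap.range_eq_map, ← Submodule.map_pointwise_smul]
  congr 1
  ext
  simp [Submodule.mem_smul_pointwise_iff_exists, Ideal.mem_span_singleton', mul_comm]

/-- The quotient of `R / J` by the multiples of `y`, as a quotient of `R`. -/
noncomputable def quotSMulTopQuotientEquiv (J : Ideal R) (y : R) :
    QuotSMulTop y (R ⧸ J) ≃ₗ[R] R ⧸ (J ⊔ Ideal.span {y}) :=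
  Submodule.quotEquivOfEq _ _ (smul_top_quotient_eq_map_mkQ J y) ≪≫ₗ
    Submodule.quotientQuotientEquivQuotientSup J (Ideal.span {y})

/-- Third isomorphism theorem: if `I ≤ (a, b)`, reducing `R / I` modulo `b` and then modulo `a`
gives `R / (a, b)`. -/
noncomputable def quotSMulTopQuotientMkEquiv (k : Type*) [CommRing k] [Algebra k R] {I : Ideal R}
    {a b : R} (hI : I ≤ Ideal.span {a, b}) :
    QuotSMulTop (Ideal.Quotient.mk I a) ((R ⧸ I) ⧸ Ideal.span {Ideal.Quotient.mk I b}) ≃ₗ[k]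
      R ⧸ Ideal.span {a, b} :=
  have sup_eq_map : Ideal.span {Ideal.Quotient.mk I b} ⊔ Ideal.span {Ideal.Quotient.mk I a} =
      (Ideal.span {a, b}).map (Ideal.Quotient.mkₐ k I) := by
    rw [Ideal.map_span, Set.image_pair, sup_comm, ← Ideal.span_insert]
    rfl
  (quotSMulTopQuotientEquiv _ _).restrictScalars k ≪≫ₗ
    (Ideal.quotientEquivAlgOfEq k sup_eq_map).toLinearEquiv ≪≫ₗ
    (DoubleQuot.quotQuotEquivQuotOfLEₐ k hI).toLinearEquiv

end Quotient

open scoped ModuleCat.Algebra in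
/-- For components `a = 0` and `b = 0` of the hypersurface `a * (b * c) = 0`, the odd `Ext` modules
from the first to the second are the coordinate ring of their intersection. -/
noncomputable def extQuotientEquivQuotientSpanPair (k : Type v) [CommRing k] {P : Type u}
    [CommRing P] [Algebra k P] {a b c F : P} (hF : F = a * (b * c)) (ha : IsRegular a)
    (hbc : IsRegular (b * c)) {n : ℕ} (hn : Even n) :
    ((Ext k (ModuleCat (P ⧸ Ideal.span {F})) (n + 1)).obj
        (Opposite.op (ModuleCat.of _
          ((P ⧸ Ideal.span {F}) ⧸ Ideal.span {Ideal.Quotient.mk (Ideal.span {F}) a})))).obj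
      (ModuleCat.of _
        ((P ⧸ Ideal.span {F}) ⧸ Ideal.span {Ideal.Quotient.mk (Ideal.span {F}) b})) ≃ₗ[k]
      P ⧸ Ideal.span {a, b} :=
  have isExactPair : IsExactPair (Ideal.Quotient.mk (Ideal.span {F}) a)
      (Ideal.Quotient.mk _ (b * c)) := by
    subst hF
    exact .of_isRegular ha hbc
  have isTorsionBy : Module.IsTorsionBy (P ⧸ Ideal.span {F})
      ((P ⧸ Ideal.span {F}) ⧸ Ideal.span {Ideal.Quotient.mk (Ideal.span {F}) b})
      (Ideal.Quotient.mk _ (b * c)) := by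
    rw [Module.isTorsionBy_quotient_iff]
    intro r
    rw [map_mul, Ideal.mem_span_singleton, smul_eq_mul, mul_assoc]
    exact dvd_mul_right _ _
  have span_le : Ideal.span {F} ≤ Ideal.span {a, b} := by
    rw [Ideal.span_singleton_le_iff_mem, hF]
    exact Ideal.mul_mem_right _ _ (Ideal.subset_span (Set.mem_insert _ _))
  isExactPair.extEquivQuotSMulTop k isTorsionBy hn ≪≫ₗ quotSMulTopQuotientMkEquiv k span_le

section Origin

open MvPolynomial

theorem ker_aeval_zero_eq_idealOfVars (σ R : Type*) [CommRing R] :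
    RingHom.ker (aeval (R := R) (0 : σ → R)) = idealOfVars σ R := by
  ext p
  rw [RingHom.mem_ker, ← pow_one (idealOfVars σ R), mem_pow_idealOfVars_iff']
  simp [constantCoeff_eq, Finsupp.degree_eq_zero_iff]

theorem finrank_quotient_idealOfVars (σ R : Type*) [CommRing R] [StrongRankCondition R] :
    Module.finrank R (MvPolynomial σ R ⧸ idealOfVars σ R) = 1 := by
  rw [← ker_aeval_zero_eq_idealOfVars, ← Module.finrank_self R]
  exact (Ideal.quotientKerAlgEquivOfRightInverse (f := aeval (R := R) (0 : σ → R)) (g := C)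
    fun c ↦ aeval_C _ c).toLinearEquiv.finrank_eq

theorem span_X_one_X_zero_sub_X_one_eq_idealOfVars (R : Type*) [CommRing R] :
    Ideal.span {X 1, X 0 - X 1} = idealOfVars (Fin 2) R := by
  rw [Ideal.span_pair_sub_left, Ideal.span_pair_comm]
  congr 1
  ext
  simp [Fin.exists_fin_two, eq_comm]

end Origin

theorem stmt_5_general {k : Type u} [Field k] {F G : MvPolynomial (Fin 2) k} (hG : G ≠ 0)
    (hF : F = MvPolynomial.X 1 * ((MvPolynomial.X 0 - MvPolynomial.X 1) * G)) {n : ℕ}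
    (hn : Even n) :
    letI R := MvPolynomial (Fin 2) k ⧸ Ideal.span {F}
    letI z1 : R := Ideal.Quotient.mk _ (MvPolynomial.X 1)
    letI z3 : R := Ideal.Quotient.mk _ (MvPolynomial.X 0 - MvPolynomial.X 1)
    Module.finrank k
      (((Ext k (ModuleCat R) (n + 1)).obj
          (Opposite.op (ModuleCat.of R (R ⧸ Ideal.span {z1})))).obj
        (ModuleCat.of R (R ⧸ Ideal.span {z3}))) = 1 := by
  have X_sub_X_ne_zero : (MvPolynomial.X 0 - MvPolynomial.X 1 : MvPolynomial (Fin 2) k) ≠ 0 :=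
    sub_ne_zero.2 (MvPolynomial.X_injective.ne zero_ne_one)
  have e := extQuotientEquivQuotientSpanPair k hF (.of_ne_zero (MvPolynomial.X_ne_zero 1))
    (.of_ne_zero (mul_ne_zero X_sub_X_ne_zero hG)) hn
  rw [span_X_one_X_zero_sub_X_one_eq_idealOfVars] at e
  exact e.finrank_eq.trans (finrank_quotient_idealOfVars _ k)

/-- Let `R = k[X,Y]/(F)`, `R₁ = R/z₁R` and `R₃ = R/z₃R` (with `z₁ = Y`, `z₃ = X − Y`).
Then `Ext¹_R(R₁, R₃)` is a 1-dimensional `k`-vector space. -/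
theorem stmt_5 {k : Type} [Field k] (lam : k) (h0 : lam ≠ 0) (h1 : lam ≠ 1)
    (F : MvPolynomial (Fin 2) k)
    (hF : F = MvPolynomial.X 0 * MvPolynomial.X 1 *
      (MvPolynomial.X 0 - MvPolynomial.X 1) *
      (MvPolynomial.X 0 - MvPolynomial.C lam * MvPolynomial.X 1)) :
    letI R := MvPolynomial (Fin 2) k ⧸ Ideal.span {F}
    letI z1 : R := Ideal.Quotient.mk _ (MvPolynomial.X 1)
    letI z3 : R := Ideal.Quotient.mk _ (MvPolynomial.X 0 - MvPolynomial.X 1)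
    Module.finrank k
      (((Ext k (ModuleCat R) 1).obj
          (Opposite.op (ModuleCat.of R (R ⧸ Ideal.span {z1})))).obj
        (ModuleCat.of R (R ⧸ Ideal.span {z3}))) = 1 := by
  have line_ne_zero : (MvPolynomial.X 0 - MvPolynomial.C lam * MvPolynomial.X 1 :
      MvPolynomial (Fin 2) k) ≠ 0 := fun h ↦ by
    simpa using congrArg (MvPolynomial.eval ![1, 0]) h
  exact stmt_5_general (mul_ne_zero (MvPolynomial.X_ne_zero 0) line_ne_zero) (by rw [hF]; ring)
    .zero
end

section
/- Fix μ ∈ k with μ ≠ 0 and μ ≠ 1, and n ≥ 1. Let Φ₀(n,μ) be the 2n×2n block lower-bidiagonal matrix over k[X,Y] whose n diagonal 2×2 blocks all equal φ(μ) = [[z₁z₃, −z₂z₃], [−μz₁z₄, z₂z₄]] and whose n−1 subdiagonal 2×2 blocks all equal φ′(μ) = (μ−1)⁻¹·[[z₁z₃, −z₂z₃], [−z₁z₃, z₂z₃]], all other blocks being zero. Then there exists a 2n×2n matrix Ψ with entries in k[X,Y] such that Φ₀(n,μ)·Ψ = Ψ·Φ₀(n,μ) = F·I₂ₙ. -/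
/-! Let `N` be the nilpotent `n × n` matrix with ones just below the diagonal. Then
`Φ₀(n,μ) = 1 ⊗ φ(μ) + N ⊗ φ′(μ)`, and `φ′(μ) = E φ(μ)` for an explicit `E`, so that
`Φ₀(n,μ) = (1 + N ⊗ E)(1 ⊗ φ(μ))`. The first factor is invertible, and in the second one
`φ(μ)` belongs to a matrix factorization of `F`, because `F` is `-(μ - 1)⁻¹` times its
determinant. -/

open scoped Kronecker Matrix

section MatrixFactorization

variable {R l m : Type*} [CommRing R] [Fintype l] [DecidableEq l] [Fintype m] [DecidableEq m]

/-- The pair `(A, B)` is a matrix factorization of the scalar `f`. Both products are required,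
since one does not determine the other when `f` is a zero divisor. -/
def IsMatrixFactorization (f : R) (A B : Matrix m m R) : Prop :=
  A * B = f • (1 : Matrix m m R) ∧ B * A = f • (1 : Matrix m m R)

namespace IsMatrixFactorization

variable {f : R} {A B : Matrix m m R}

theorem smul_adjugate (c : R) (A : Matrix m m R) :
    IsMatrixFactorization (c * A.det) A (c • A.adjugate) :=
  ⟨by rw [Matrix.mul_smul, Matrix.mul_adjugate, smul_smul],
    by rw [Matrix.smul_mul, Matrix.adjugate_mul, smul_smul]⟩

theorem units_mul (h : IsMatrixFactorization f A B) (U : (Matrix m m R)ˣ) :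
    IsMatrixFactorization f (U.val * A) (B * U⁻¹.val) := by
  constructor
  · rw [mul_assoc, ← mul_assoc A, h.1, smul_one_mul, mul_smul_comm, U.mul_inv]
  · rw [mul_assoc, U.inv_mul_cancel_left, h.2]

theorem one_kronecker (h : IsMatrixFactorization f A B) :
    IsMatrixFactorization f ((1 : Matrix l l R) ⊗ₖ A) ((1 : Matrix l l R) ⊗ₖ B) := by
  constructor
  · rw [← Matrix.mul_kronecker_mul, h.1, one_mul, Matrix.kronecker_smul, Matrix.one_kronecker_one]
  · rw [← Matrix.mul_kronecker_mul, h.2, one_mul, Matrix.kronecker_smul, Matrix.one_kronecker_one]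

theorem reindex (h : IsMatrixFactorization f A B) (e : m ≃ l) :
    IsMatrixFactorization f (A.reindex e e) (B.reindex e e) := by
  have map_smul_one : Matrix.reindexAlgEquiv R R e (f • 1) = f • 1 := by rw [map_smul, map_one]
  constructor
  · rw [← map_smul_one, ← h.1, map_mul]
    rfl
  · rw [← map_smul_one, ← h.2, map_mul]
    rfl

end IsMatrixFactorization

end MatrixFactorization

section Nilpotent

variable {R S l m : Type*} [CommRing R] [CommSemiring S] [Fintype l] [DecidableEq l] [Fintype m]
  [DecidableEq m]

theorem isNilpotent_of_isUpperTriangular_of_diag_eq_zero [LinearOrder m] {N : Matrix m m R}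
    (hN : N.IsUpperTriangular) (hdiag : N.diag = 0) : IsNilpotent N := by
  have charpoly_eq : N.charpoly = Polynomial.X ^ Fintype.card m := by
    rw [Matrix.charpoly_of_isUpperTriangular N hN]
    have h (i : m) : N i i = 0 := congrFun hdiag i
    simp [h]
  refine ⟨Fintype.card m, ?_⟩
  simpa only [charpoly_eq, map_pow, Polynomial.aeval_X] using N.aeval_self_charpoly

theorem kronecker_pow (A : Matrix l l S) (B : Matrix m m S) (r : ℕ) :
    (A ⊗ₖ B) ^ r = (A ^ r) ⊗ₖ (B ^ r) := by
  induction r with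
  | zero => simp only [pow_zero, Matrix.one_kronecker_one]
  | succ r ih => rw [pow_succ, pow_succ, pow_succ, ih, Matrix.mul_kronecker_mul]

theorem isNilpotent_kronecker {N : Matrix l l S} (hN : IsNilpotent N) (E : Matrix m m S) :
    IsNilpotent (N ⊗ₖ E) := by
  obtain ⟨r, hr⟩ := hN
  exact ⟨r, by rw [kronecker_pow, hr, Matrix.zero_kronecker]⟩

theorem IsMatrixFactorization.exists_one_kronecker_add {f : R} {A B : Matrix m m R}
    (h : IsMatrixFactorization f A B) {N : Matrix l l R} (hN : IsNilpotent N)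
    (E : Matrix m m R) :
    ∃ Ψ, IsMatrixFactorization f (1 ⊗ₖ A + N ⊗ₖ (E * A)) Ψ := by
  obtain ⟨U, hU⟩ := (isNilpotent_kronecker hN E).isUnit_one_add
  have factor : 1 ⊗ₖ A + N ⊗ₖ (E * A) = U.val * (1 ⊗ₖ A) := by
    rw [hU, add_mul, one_mul, ← Matrix.mul_kronecker_mul, mul_one]
  exact ⟨_, factor ▸ h.one_kronecker.units_mul U⟩

end Nilpotent

section BlockLowerBidiagonal

/-- The nilpotent `n × n` matrix with ones just below the diagonal and zeros elsewhere. -/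
def lowerShift (R : Type*) [Zero R] [One R] (n : ℕ) : Matrix (Fin n) (Fin n) R :=
  Matrix.of fun i j => if (i : ℕ) = j + 1 then 1 else 0

variable {R S : Type*} [CommRing R] [Semiring S] {b : ℕ}

theorem isNilpotent_lowerShift (n : ℕ) : IsNilpotent (lowerShift R n) := by
  rw [← Matrix.isNilpotent_transpose_iff]
  apply isNilpotent_of_isUpperTriangular_of_diag_eq_zero
  · intro i j (hij : j < i)
    exact if_neg (by omega)
  · ext i
    exact if_neg (by omega)

/-- The `n × n` block matrix of `b × b` blocks with `A` on the diagonal, `B` just below it and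
zeros elsewhere. The entry in row `r` of block row `i` has row index `b * i + r`, and likewise
for columns. -/
def blockLowerBidiagonal (n : ℕ) (A B : Matrix (Fin b) (Fin b) S) :
    Matrix (Fin (b * n)) (Fin (b * n)) S :=
  let e : Fin n × Fin b ≃ Fin (b * n) := finProdFinEquiv.trans (finCongr (mul_comm n b))
  (1 ⊗ₖ A + lowerShift S n ⊗ₖ B).reindex e e

theorem blockLowerBidiagonal_apply [NeZero b] (n : ℕ) (A B : Matrix (Fin b) (Fin b) S)
    (p q : Fin (b * n)) :
    blockLowerBidiagonal n A B p q =
      if (p : ℕ) / b = q / b then A (Fin.ofNat b p) (Fin.ofNat b q)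
      else if (p : ℕ) / b = q / b + 1 then B (Fin.ofNat b p) (Fin.ofNat b q)
      else 0 := by
  have one_apply (i j : Fin n) :
      (1 : Matrix (Fin n) (Fin n) S) i j = if (i : ℕ) = j then 1 else 0 := by
    simp only [Matrix.one_apply, Fin.ext_iff]
  have entry_eq : blockLowerBidiagonal n A B p q =
      (if (p : ℕ) / b = q / b then 1 else 0) * A (Fin.ofNat b p) (Fin.ofNat b q) +
        (if (p : ℕ) / b = q / b + 1 then 1 else 0) * B (Fin.ofNat b p) (Fin.ofNat b q) :=
    -- By construction `finProdFinEquiv.symm` computes to `(p / b, p % b)`.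
    congrArg (· * A (Fin.ofNat b p) (Fin.ofNat b q) + _) (one_apply _ _)
  simp only [entry_eq, boole_mul]
  split_ifs with diagonal subdiagonal
  · omega
  all_goals simp only [add_zero, zero_add]

theorem IsMatrixFactorization.exists_blockLowerBidiagonal {f : R} {A B : Matrix (Fin b) (Fin b) R}
    (h : IsMatrixFactorization f A B) (n : ℕ) (E : Matrix (Fin b) (Fin b) R) :
    ∃ Ψ, IsMatrixFactorization f (blockLowerBidiagonal n A (E * A)) Ψ := by
  obtain ⟨Ψ, hΨ⟩ := h.exists_one_kronecker_add (isNilpotent_lowerShift n) E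
  exact ⟨_, hΨ.reindex _⟩

end BlockLowerBidiagonal

section Cycle

variable {R : Type*} [CommRing R] (z₁ z₂ z₃ z₄ μ c : R)

/-- The diagonal block `φ(μ)` of `Φ₀(n,μ)`. -/
def cycleDiagBlock : Matrix (Fin 2) (Fin 2) R :=
  !![z₁ * z₃, -(z₂ * z₃); -(μ * z₁ * z₄), z₂ * z₄]

/-- The subdiagonal block `φ′(μ)` of `Φ₀(n,μ)`, where `c` stands for `(μ - 1)⁻¹`. -/
def cycleSubdiagBlock : Matrix (Fin 2) (Fin 2) R :=
  c • !![z₁ * z₃, -(z₂ * z₃); -(z₁ * z₃), z₂ * z₃]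

theorem det_cycleDiagBlock :
    (cycleDiagBlock z₁ z₂ z₃ z₄ μ).det = (1 - μ) * (z₁ * z₂ * z₃ * z₄) := by
  rw [cycleDiagBlock, Matrix.det_fin_two_of]
  ring

theorem cycleSubdiagBlock_eq_mul_cycleDiagBlock :
    cycleSubdiagBlock z₁ z₂ z₃ c = !![c, 0; -c, 0] * cycleDiagBlock z₁ z₂ z₃ z₄ μ := by
  simp [cycleSubdiagBlock, cycleDiagBlock]

variable {μ c}

theorem exists_isMatrixFactorization_cycleDiagBlock (hc : c * (μ - 1) = 1) :
    ∃ ψ, IsMatrixFactorization (z₁ * z₂ * z₃ * z₄) (cycleDiagBlock z₁ z₂ z₃ z₄ μ) ψ := by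
  have neg_c_mul_det : -c * (cycleDiagBlock z₁ z₂ z₃ z₄ μ).det = z₁ * z₂ * z₃ * z₄ := by
    rw [det_cycleDiagBlock]
    linear_combination z₁ * z₂ * z₃ * z₄ * hc
  rw [← neg_c_mul_det]
  exact ⟨_, .smul_adjugate (-c) _⟩

theorem stmt_9_general (hc : c * (μ - 1) = 1) (n : ℕ) :
    ∃ Ψ, IsMatrixFactorization (z₁ * z₂ * z₃ * z₄)
      (blockLowerBidiagonal n (cycleDiagBlock z₁ z₂ z₃ z₄ μ) (cycleSubdiagBlock z₁ z₂ z₃ c)) Ψ := by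
  obtain ⟨ψ, hψ⟩ := exists_isMatrixFactorization_cycleDiagBlock z₁ z₂ z₃ z₄ hc
  rw [cycleSubdiagBlock_eq_mul_cycleDiagBlock z₁ z₂ z₃ z₄ μ c]
  exact hψ.exists_blockLowerBidiagonal n _

end Cycle

/-- For `μ ≠ 0,1` and `n ≥ 1`, the `2n×2n` block lower-bidiagonal matrix `Φ₀(n,μ)`
with diagonal blocks `φ(μ) = [[z₁z₃, −z₂z₃], [−μz₁z₄, z₂z₄]]` and subdiagonal
blocks `φ′(μ) = (μ−1)⁻¹[[z₁z₃, −z₂z₃], [−z₁z₃, z₂z₃]]` is part of a matrix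
factorization of `F`: there is `Ψ` with `Φ₀(n,μ)Ψ = ΨΦ₀(n,μ) = F·I₂ₙ`. -/
theorem stmt_9 {k : Type*} [Field k] (lam : k) (h0 : lam ≠ 0) (h1 : lam ≠ 1)
    (z1 z2 z3 z4 F : MvPolynomial (Fin 2) k)
    (hz1 : z1 = MvPolynomial.X 1) (hz2 : z2 = MvPolynomial.X 0)
    (hz3 : z3 = MvPolynomial.X 0 - MvPolynomial.X 1)
    (hz4 : z4 = MvPolynomial.X 0 - MvPolynomial.C lam * MvPolynomial.X 1)
    (hF : F = z1 * z2 * z3 * z4)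
    (μ : k) (hμ0 : μ ≠ 0) (hμ1 : μ ≠ 1) (n : ℕ) (hn : 1 ≤ n)
    (phi phi' : Matrix (Fin 2) (Fin 2) (MvPolynomial (Fin 2) k))
    (hphi : phi = !![z1 * z3, -(z2 * z3); -(MvPolynomial.C μ * z1 * z4), z2 * z4])
    (hphi' : phi' = (MvPolynomial.C ((μ - 1)⁻¹) : MvPolynomial (Fin 2) k) •
      !![z1 * z3, -(z2 * z3); -(z1 * z3), z2 * z3])
    (Φ : Matrix (Fin (2 * n)) (Fin (2 * n)) (MvPolynomial (Fin 2) k))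
    (hΦ : ∀ p q : Fin (2 * n), Φ p q =
      if p.val / 2 = q.val / 2 then phi ⟨p.val % 2, by omega⟩ ⟨q.val % 2, by omega⟩
      else if p.val / 2 = q.val / 2 + 1 then
        phi' ⟨p.val % 2, by omega⟩ ⟨q.val % 2, by omega⟩
      else 0) :
    ∃ Ψ : Matrix (Fin (2 * n)) (Fin (2 * n)) (MvPolynomial (Fin 2) k),
      Φ * Ψ = F • (1 : Matrix (Fin (2 * n)) (Fin (2 * n)) (MvPolynomial (Fin 2) k)) ∧
      Ψ * Φ = F • (1 : Matrix (Fin (2 * n)) (Fin (2 * n)) (MvPolynomial (Fin 2) k)) := by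
  have hc : MvPolynomial.C (μ - 1)⁻¹ * (MvPolynomial.C μ - 1) = (1 : MvPolynomial (Fin 2) k) := by
    rw [← MvPolynomial.C_1, ← MvPolynomial.C_sub, ← MvPolynomial.C_mul,
      inv_mul_cancel₀ (sub_ne_zero.mpr hμ1)]
  have hΦ_eq : Φ = blockLowerBidiagonal n phi phi' :=
    Matrix.ext fun p q => (hΦ p q).trans (blockLowerBidiagonal_apply n phi phi' p q).symm
  rw [hΦ_eq, hphi, hphi', hF]
  exact stmt_9_general z1 z2 z3 z4 hc n
end

section
/- Fix n ≥ 1. Let Φ₂*(n)⁺ be the (2n+1)×(2n+1) lower-triangular matrix over k[X,Y], with rows and columns indexed 0,…,2n, whose only nonzero entries are: (0,0) = z₁z₄; (1,0) = −z₁z₃, (1,1) = z₂z₃; for 1 ≤ j ≤ n−1: (2j, 2j−1) = −z₂z₄, (2j, 2j) = z₁z₄, and (2j+1, 2j−1) = z₂z₃, (2j+1, 2j) = −z₁z₃, (2j+1, 2j+1) = z₂z₃; and (2n, 2n−1) = −z₂, (2n, 2n) = z₁. Then there exists a (2n+1)×(2n+1) matrix Ψ with entries in k[X,Y] such that Φ₂*(n)⁺·Ψ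 = Ψ·Φ₂*(n)⁺ = F·I₂ₙ₊₁. -/
/-! Every entry of `Φ₂*(n)⁺` is `dᵢ uᵢⱼ eⱼ`, where `uᵢⱼ ∈ {0, 1, -1}` are the entries of a lower
unitriangular matrix `U`, each `dᵢ` divides `z₃z₄` and each `eⱼ` divides `z₁z₂`. So `Φ₂*(n)⁺` is the
product of a diagonal factor of `z₃z₄`, a matrix of determinant one and a diagonal factor of
`z₁z₂`, and factorizations multiply. -/

section MatrixFactorization

open Matrix

variable {R l m n : Type*} [CommRing R]
  [Fintype l] [Fintype m] [Fintype n] [DecidableEq l] [DecidableEq m] [DecidableEq n]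

/-- `(A, B)` is a matrix factorization of the scalar `f`. Rectangular matrices are allowed, so that
factorizations can be composed. -/
structure IsMatrixFactorization_s13 (f : R) (A : Matrix m n R) (B : Matrix n m R) : Prop where
  mul_eq_smul_one : A * B = f • (1 : Matrix m m R)
  mul_eq_smul_one' : B * A = f • (1 : Matrix n n R)

namespace IsMatrixFactorization_s13

theorem mul {f g : R} {A : Matrix l m R} {A' : Matrix m l R} {B : Matrix m n R} {B' : Matrix n m R}
    (hA : IsMatrixFactorization_s13 f A A') (hB : IsMatrixFactorization_s13 g B B') :
    IsMatrixFactorization_s13 (f * g) (A * B) (B' * A') where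
  mul_eq_smul_one := calc
    A * B * (B' * A') = A * (B * B') * A' := by simp only [Matrix.mul_assoc]
    _ = (f * g) • 1 := by
      rw [hB.mul_eq_smul_one, Matrix.mul_smul, Matrix.mul_one, Matrix.smul_mul,
        hA.mul_eq_smul_one, smul_smul, mul_comm]
  mul_eq_smul_one' := calc
    B' * A' * (A * B) = B' * (A' * A) * B := by simp only [Matrix.mul_assoc]
    _ = (f * g) • 1 := by
      rw [hA.mul_eq_smul_one', Matrix.mul_smul, Matrix.mul_one, Matrix.smul_mul,
        hB.mul_eq_smul_one', smul_smul]

theorem diagonal {f : R} {d d' : n → R} (h : ∀ i, d i * d' i = f) :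
    IsMatrixFactorization_s13 f (diagonal d) (diagonal d') where
  mul_eq_smul_one := by simp only [diagonal_mul_diagonal, h, smul_one_eq_diagonal]
  mul_eq_smul_one' := by simp only [diagonal_mul_diagonal, mul_comm (d' _), h, smul_one_eq_diagonal]

theorem adjugate (A : Matrix n n R) : IsMatrixFactorization_s13 A.det A A.adjugate where
  mul_eq_smul_one := mul_adjugate A
  mul_eq_smul_one' := adjugate_mul A

theorem exists_diagonal_mul_mul_diagonal {f g : R} {d e : m → R} (U : Matrix m m R)
    (hd : ∀ i, d i ∣ f) (he : ∀ j, e j ∣ g) :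
    ∃ B, IsMatrixFactorization_s13 (f * U.det * g) (Matrix.diagonal d * U * Matrix.diagonal e) B := by
  choose d' hd' using hd
  choose e' he' using he
  exact ⟨_, ((diagonal fun i => (hd' i).symm).mul (adjugate U)).mul
    (diagonal fun j => (he' j).symm)⟩

end IsMatrixFactorization_s13

end MatrixFactorization

section RelationMatrix

open Matrix

/-- The matrix `Φ₂*(n)⁺`, with `z₁, …, z₄` arbitrary elements of a ring. -/
def relationMatrix {R : Type*} [Ring R] (z1 z2 z3 z4 : R) (n : ℕ) :
    Matrix (Fin (2 * n + 1)) (Fin (2 * n + 1)) R :=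
  of fun i j =>
    if i.val = 0 then (if j.val = 0 then z1 * z4 else 0)
    else if i.val = 2 * n then
      (if j.val = i.val - 1 then -z2 else if j.val = i.val then z1 else 0)
    else if i.val % 2 = 0 then
      (if j.val = i.val - 1 then -(z2 * z4)
       else if j.val = i.val then z1 * z4 else 0)
    else
      (if i.val ≠ 1 ∧ j.val = i.val - 2 then z2 * z3
       else if j.val = i.val - 1 then -(z1 * z3)
       else if j.val = i.val then z2 * z3 else 0)

/-- The unitriangular matrix `U` of the coefficients in `{0, 1, -1}` of the entries of
`relationMatrix`. -/
def relationCoeff (R : Type*) [Ring R] (N : ℕ) : Matrix (Fin N) (Fin N) R :=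
  of fun i j =>
    if j.val = i.val then 1
    else if j.val + 1 = i.val then -1
    else if j.val + 2 = i.val ∧ Odd i.val then 1
    else 0

/-- The factor common to the entries of row `i` of `relationMatrix`, a divisor of `z₃z₄`. -/
def rowFactor {R : Type*} [One R] (z3 z4 : R) (n i : ℕ) : R :=
  if i = 2 * n then 1 else if Even i then z4 else z3

/-- The factor common to the entries of column `j` of `relationMatrix`, a divisor of `z₁z₂`. -/
def columnFactor {R : Type*} (z1 z2 : R) (j : ℕ) : R :=
  if Even j then z1 else z2

theorem rowFactor_dvd {R : Type*} [CommMonoid R] (z3 z4 : R) (n i : ℕ) :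
    rowFactor z3 z4 n i ∣ z3 * z4 := by
  unfold rowFactor
  split_ifs
  exacts [one_dvd _, dvd_mul_left _ _, dvd_mul_right _ _]

theorem columnFactor_dvd {R : Type*} [CommSemigroup R] (z1 z2 : R) (j : ℕ) :
    columnFactor z1 z2 j ∣ z1 * z2 := by
  unfold columnFactor
  split_ifs
  exacts [dvd_mul_right _ _, dvd_mul_left _ _]

variable {R : Type*} [CommRing R]

theorem det_relationCoeff (N : ℕ) : (relationCoeff R N).det = 1 := by
  have lower : (relationCoeff R N).BlockTriangular OrderDual.toDual := by
    intro i j (hij : i.val < j.val)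
    rw [relationCoeff, of_apply, if_neg (by omega), if_neg (by omega), if_neg (by omega)]
  rw [det_of_isLowerTriangular _ lower]
  simp [relationCoeff]

theorem relationMatrix_eq_diagonal_mul_mul_diagonal (z1 z2 z3 z4 : R) {n : ℕ} (hn : 1 ≤ n) :
    relationMatrix z1 z2 z3 z4 n =
      diagonal (fun i => rowFactor z3 z4 n i.val) * relationCoeff R (2 * n + 1) *
        diagonal (fun j => columnFactor z1 z2 j.val) := by
  ext i j
  simp only [mul_diagonal, diagonal_mul, relationMatrix, relationCoeff, rowFactor, columnFactor,
    of_apply, Nat.even_iff, Nat.odd_iff]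
  split_ifs <;> first | omega | ring

theorem stmt_13_general (z1 z2 z3 z4 : R) {n : ℕ} (hn : 1 ≤ n) :
    ∃ Ψ, IsMatrixFactorization_s13 (z1 * z2 * z3 * z4) (relationMatrix z1 z2 z3 z4 n) Ψ := by
  have hF : z1 * z2 * z3 * z4 = z3 * z4 * (relationCoeff R (2 * n + 1)).det * (z1 * z2) := by
    rw [det_relationCoeff]
    ring
  rw [hF, relationMatrix_eq_diagonal_mul_mul_diagonal z1 z2 z3 z4 hn]
  exact IsMatrixFactorization_s13.exists_diagonal_mul_mul_diagonal _
    (fun i => rowFactor_dvd z3 z4 n i.val) (fun j => columnFactor_dvd z1 z2 j.val)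

end RelationMatrix

/-- For `n ≥ 1`, the `(2n+1)×(2n+1)` matrix of relations `Φ₂*(n)⁺` of `M₂*(n)⁺` is
part of a matrix factorization of `F`. -/
theorem stmt_13 {k : Type*} [Field k] (lam : k) (h0 : lam ≠ 0) (h1 : lam ≠ 1)
    (z1 z2 z3 z4 F : MvPolynomial (Fin 2) k)
    (hz1 : z1 = MvPolynomial.X 1) (hz2 : z2 = MvPolynomial.X 0)
    (hz3 : z3 = MvPolynomial.X 0 - MvPolynomial.X 1)
    (hz4 : z4 = MvPolynomial.X 0 - MvPolynomial.C lam * MvPolynomial.X 1)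
    (hF : F = z1 * z2 * z3 * z4)
    (n : ℕ) (hn : 1 ≤ n)
    (Φ : Matrix (Fin (2 * n + 1)) (Fin (2 * n + 1)) (MvPolynomial (Fin 2) k))
    (hΦ : ∀ i j : Fin (2 * n + 1), Φ i j =
      if i.val = 0 then (if j.val = 0 then z1 * z4 else 0)
      else if i.val = 2 * n then
        (if j.val = i.val - 1 then -z2 else if j.val = i.val then z1 else 0)
      else if i.val % 2 = 0 then
        (if j.val = i.val - 1 then -(z2 * z4)
         else if j.val = i.val then z1 * z4 else 0)
      else
        (if i.val ≠ 1 ∧ j.val = i.val - 2 then z2 * z3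
         else if j.val = i.val - 1 then -(z1 * z3)
         else if j.val = i.val then z2 * z3 else 0)) :
    ∃ Ψ : Matrix (Fin (2 * n + 1)) (Fin (2 * n + 1)) (MvPolynomial (Fin 2) k),
      Φ * Ψ = F • (1 : Matrix (Fin (2 * n + 1)) (Fin (2 * n + 1)) (MvPolynomial (Fin 2) k)) ∧
      Ψ * Φ = F • (1 : Matrix (Fin (2 * n + 1)) (Fin (2 * n + 1)) (MvPolynomial (Fin 2) k)) := by
  subst hF
  obtain rfl : Φ = relationMatrix z1 z2 z3 z4 n := Matrix.ext hΦ
  obtain ⟨Ψ, hΨ⟩ := stmt_13_general z1 z2 z3 z4 hn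
  exact ⟨Ψ, hΨ.mul_eq_smul_one, hΨ.mul_eq_smul_one'⟩
end

section
/- Fix n ≥ 0. Let Φ₅(n)⁺ be the (2n+2)×(2n+2) matrix over k[X,Y] obtained from Φ₄(n)⁺ by multiplying its column 0 by z₁ and its column 2n+1 by z₂, where Φ₄(n)⁺ is the lower-triangular matrix with rows and columns indexed 0,…,2n+1 whose only nonzero entries are: (0,0) = z₃; (1,0) = −z₄, (1,1) = z₁z₄; for 1 ≤ j ≤ n: (2j, 2j−1) = −z₁z₃, (2j, 2j) = z₂z₃, and (2j+1, 2j−1) = z₁z₄, (2j+1, 2j) = −z₂z₄, (2j+1, 2j+1) = z₁z₄. Then there exists a (2n+2)×(2n+2) matrix Ψ with entries in k[X,Y] such that Φ₅(n)⁺·Ψ = Ψ·Φ₅(n)⁺ = F·I₂ₙ₊₂. -/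
/-!
Dividing row `i` of `Φ₄(n)⁺` by `z₃` or `z₄` according to the parity of `i`, and column `j` by
`1`, `z₁` or `z₂`, leaves an integer lower triangular matrix `U` with ones on the diagonal. Hence
`Φ₅(n)⁺ = D * U * E` with `D` and `E` diagonal, where the entries of `D` divide `z₃ z₄`, those of
`E` divide `z₁ z₂`, and `U` is invertible. Complementary divisors give diagonal matrices `D'`, `E'`
with `D * D' = z₃ z₄` and `E * E' = z₁ z₂`, and `Ψ = E' * U⁻¹ * D'` works.
-/

section MatrixFactorization

open Matrix

variable {l m n R : Type*} [Fintype l] [Fintype m] [Fintype n]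
  [DecidableEq l] [DecidableEq m] [DecidableEq n]

/-- `(A, B)` is a matrix factorization of `f`; the two factors may be rectangular. -/
structure IsMatrixFactorization_s16 [CommSemiring R] (f : R) (A : Matrix m n R) (B : Matrix n m R) :
    Prop where
  left_mul_right : A * B = f • 1
  right_mul_left : B * A = f • 1

theorem IsMatrixFactorization_s16.mul [CommSemiring R] {f g : R} {A : Matrix l m R} {B : Matrix m l R}
    {C : Matrix m n R} {D : Matrix n m R} (hAB : IsMatrixFactorization_s16 f A B)
    (hCD : IsMatrixFactorization_s16 g C D) : IsMatrixFactorization_s16 (f * g) (A * C) (D * B) where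
  left_mul_right :=
    calc A * C * (D * B) = A * (C * D) * B := by simp only [Matrix.mul_assoc]
      _ = g • (A * B) := by simp only [hCD.left_mul_right, Matrix.mul_smul, Matrix.mul_one,
        Matrix.smul_mul]
      _ = (f * g) • 1 := by rw [hAB.left_mul_right, smul_smul, mul_comm]
  right_mul_left :=
    calc D * B * (A * C) = D * (B * A) * C := by simp only [Matrix.mul_assoc]
      _ = f • (D * C) := by simp only [hAB.right_mul_left, Matrix.mul_smul, Matrix.mul_one,
        Matrix.smul_mul]
      _ = (f * g) • 1 := by rw [hCD.right_mul_left, smul_smul]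

theorem isMatrixFactorization_diagonal [CommSemiring R] {f : R} {a b : m → R}
    (h : ∀ i, a i * b i = f) : IsMatrixFactorization_s16 f (diagonal a) (diagonal b) where
  left_mul_right := by simp only [diagonal_mul_diagonal, h, smul_one_eq_diagonal]
  right_mul_left := by
    simp only [diagonal_mul_diagonal, mul_comm (b _), h, smul_one_eq_diagonal]

theorem isMatrixFactorization_one_inv [CommRing R] {A : Matrix m m R} (h : IsUnit A.det) :
    IsMatrixFactorization_s16 1 A A⁻¹ where
  left_mul_right := by rw [mul_nonsing_inv A h, one_smul]
  right_mul_left := by rw [nonsing_inv_mul A h, one_smul]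

end MatrixFactorization

/-- The sequence `x, y, x, y, …` of length `N`. -/
def alternating {α : Type*} {N : ℕ} (x y : α) (i : Fin N) : α :=
  if i.val % 2 = 0 then x else y

theorem alternating_mul_alternating_swap {M : Type*} [CommMagma M] {N : ℕ} (x y : M) (i : Fin N) :
    alternating x y i * alternating y x i = x * y := by
  unfold alternating
  split_ifs
  exacts [rfl, mul_comm y x]

section Relations

open Matrix

/-- The matrix `U` left from `Φ₄(n)⁺` once the factors `zᵢ` common to its rows and columns are
removed: even rows read `…, 0, -1, 1, 0, …` and odd rows `…, 0, 1, -1, 1, 0, …`, the last nonzero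
entry being on the diagonal. -/
def unipotentCore (R : Type*) [Ring R] (N : ℕ) : Matrix (Fin N) (Fin N) R :=
  of fun i j =>
    if j = i then 1
    else if j.val + 1 = i then -1
    else if i.val % 2 = 1 ∧ j.val + 2 = i then 1
    else 0

variable {R : Type*} [CommRing R]

theorem det_unipotentCore (N : ℕ) : (unipotentCore R N).det = 1 := by
  have lowerTriangular : (unipotentCore R N).IsLowerTriangular := by
    intro i j (hij : i < j)
    simp only [unipotentCore, of_apply]
    grind
  rw [det_of_isLowerTriangular _ lowerTriangular]
  simp only [unipotentCore, of_apply, if_true, Finset.prod_const_one]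

/-- The matrix `Φ₄(n)⁺`, with ring elements in place of the linear forms `zᵢ`. -/
def phi₄ (z1 z2 z3 z4 : R) (n : ℕ) : Matrix (Fin (2 * n + 2)) (Fin (2 * n + 2)) R :=
  of fun i j =>
    if i.val = 0 then (if j.val = 0 then z3 else 0)
    else if i.val = 1 then
      (if j.val = 0 then -z4 else if j.val = 1 then z1 * z4 else 0)
    else if i.val % 2 = 0 then
      (if j.val = i.val - 1 then -(z1 * z3)
       else if j.val = i.val then z2 * z3 else 0)
    else
      (if j.val = i.val - 2 then z1 * z4
       else if j.val = i.val - 1 then -(z2 * z4)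
       else if j.val = i.val then z1 * z4 else 0)

/-- The matrix `Φ₅(n)⁺`: column `0` of `Φ₄(n)⁺` is multiplied by `z₁` and column `2n+1` by `z₂`. -/
def phi₅ (z1 z2 z3 z4 : R) (n : ℕ) : Matrix (Fin (2 * n + 2)) (Fin (2 * n + 2)) R :=
  of fun i j =>
    (if j.val = 0 then z1 else if j.val = 2 * n + 1 then z2 else 1) * phi₄ z1 z2 z3 z4 n i j

/-- The factors `z₁, z₁, z₂, z₁, z₂, …, z₁, z₂, z₁ z₂` common to the columns of `Φ₅(n)⁺`. -/
def colFactor (z1 z2 : R) (n : ℕ) (j : Fin (2 * n + 2)) : R :=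
  if j.val = 0 then z1 else if j.val = 2 * n + 1 then z1 * z2 else alternating z2 z1 j

/-- The complements `z₂, z₂, z₁, z₂, z₁, …, z₂, z₁, 1` in `z₁ z₂` of the column factors. -/
def colCofactor (z1 z2 : R) (n : ℕ) (j : Fin (2 * n + 2)) : R :=
  if j.val = 0 then z2 else if j.val = 2 * n + 1 then 1 else alternating z1 z2 j

theorem colFactor_mul_colCofactor (z1 z2 : R) (n : ℕ) (j : Fin (2 * n + 2)) :
    colFactor z1 z2 n j * colCofactor z1 z2 n j = z1 * z2 := by
  unfold colFactor colCofactor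
  split_ifs
  · rfl
  · exact mul_one _
  · rw [alternating_mul_alternating_swap, mul_comm]

theorem phi₄_eq_diagonal_mul_unipotentCore_mul_diagonal (z1 z2 z3 z4 : R) (n : ℕ) :
    phi₄ z1 z2 z3 z4 n = diagonal (alternating z3 z4) * unipotentCore R (2 * n + 2) *
      diagonal (fun j => if j.val = 0 then 1 else alternating z2 z1 j) := by
  ext i j
  simp only [mul_diagonal, diagonal_mul, phi₄, unipotentCore, alternating, of_apply]
  grind (splits := 20)

theorem phi₅_eq_diagonal_mul_unipotentCore_mul_diagonal (z1 z2 z3 z4 : R) (n : ℕ) :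
    phi₅ z1 z2 z3 z4 n = diagonal (alternating z3 z4) * unipotentCore R (2 * n + 2) *
      diagonal (colFactor z1 z2 n) := by
  ext i j
  simp only [phi₅, phi₄_eq_diagonal_mul_unipotentCore_mul_diagonal, mul_diagonal, of_apply,
    colFactor, alternating]
  grind

theorem stmt_16_general (z1 z2 z3 z4 : R) (n : ℕ) :
    ∃ Ψ, IsMatrixFactorization_s16 (z1 * z2 * z3 * z4) (phi₅ z1 z2 z3 z4 n) Ψ := by
  have rows : IsMatrixFactorization_s16 (z3 * z4)
      (diagonal (alternating (N := 2 * n + 2) z3 z4)) (diagonal (alternating z4 z3)) :=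
    isMatrixFactorization_diagonal (alternating_mul_alternating_swap z3 z4)
  have core : IsMatrixFactorization_s16 1
      (unipotentCore R (2 * n + 2)) (unipotentCore R (2 * n + 2))⁻¹ :=
    isMatrixFactorization_one_inv (det_unipotentCore (R := R) _ ▸ isUnit_one)
  have columns : IsMatrixFactorization_s16 (z1 * z2)
      (diagonal (colFactor z1 z2 n)) (diagonal (colCofactor z1 z2 n)) :=
    isMatrixFactorization_diagonal (colFactor_mul_colCofactor z1 z2 n)
  have F_eq : z1 * z2 * z3 * z4 = z3 * z4 * 1 * (z1 * z2) := by ring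
  rw [phi₅_eq_diagonal_mul_unipotentCore_mul_diagonal, F_eq]
  exact ⟨_, (rows.mul core).mul columns⟩

end Relations

/-- For `n ≥ 0`, the matrix `Φ₅(n)⁺`, obtained from `Φ₄(n)⁺` by multiplying the
first column by `z₁` and the last column by `z₂`, is part of a matrix
factorization of `F`. -/
theorem stmt_16 {k : Type*} [Field k] (lam : k) (h0 : lam ≠ 0) (h1 : lam ≠ 1)
    (z1 z2 z3 z4 F : MvPolynomial (Fin 2) k)
    (hz1 : z1 = MvPolynomial.X 1) (hz2 : z2 = MvPolynomial.X 0)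
    (hz3 : z3 = MvPolynomial.X 0 - MvPolynomial.X 1)
    (hz4 : z4 = MvPolynomial.X 0 - MvPolynomial.C lam * MvPolynomial.X 1)
    (hF : F = z1 * z2 * z3 * z4)
    (n : ℕ)
    (Φ₄ Φ₅ : Matrix (Fin (2 * n + 2)) (Fin (2 * n + 2)) (MvPolynomial (Fin 2) k))
    (hΦ₄ : ∀ i j : Fin (2 * n + 2), Φ₄ i j =
      if i.val = 0 then (if j.val = 0 then z3 else 0)
      else if i.val = 1 then
        (if j.val = 0 then -z4 else if j.val = 1 then z1 * z4 else 0)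
      else if i.val % 2 = 0 then
        (if j.val = i.val - 1 then -(z1 * z3)
         else if j.val = i.val then z2 * z3 else 0)
      else
        (if j.val = i.val - 2 then z1 * z4
         else if j.val = i.val - 1 then -(z2 * z4)
         else if j.val = i.val then z1 * z4 else 0))
    (hΦ₅ : ∀ i j : Fin (2 * n + 2), Φ₅ i j =
      (if j.val = 0 then z1 else if j.val = 2 * n + 1 then z2 else 1) * Φ₄ i j) :
    ∃ Ψ : Matrix (Fin (2 * n + 2)) (Fin (2 * n + 2)) (MvPolynomial (Fin 2) k),
      Φ₅ * Ψ = F • (1 : Matrix (Fin (2 * n + 2)) (Fin (2 * n + 2)) (MvPolynomial (Fin 2) k)) ∧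
      Ψ * Φ₅ = F • (1 : Matrix (Fin (2 * n + 2)) (Fin (2 * n + 2)) (MvPolynomial (Fin 2) k)) := by
  obtain rfl : Φ₅ = phi₅ z1 z2 z3 z4 n :=
    Matrix.ext fun i j => (hΦ₅ i j).trans (congrArg _ (hΦ₄ i j))
  exact hF ▸ (stmt_16_general z1 z2 z3 z4 n).imp fun _ h => ⟨h.left_mul_right, h.right_mul_left⟩
end

section
/- Fix n ≥ 1. Let Φ₆(n) be the (2n+1)×(2n+1) matrix over k[X,Y] obtained from Φ₂(n)⁺ by replacing its last row (0,…,0,−z₁z₃, z₂z₃) with (0,…,0,−z₁, z₂) (division of the last row by z₃), where Φ₂(n)⁺ is the lower-triangular matrix with rows and columns indexed 0,…,2n whose only nonzero entries are: (0,0) = z₃; (1,0) = −z₄, (1,1) = z₁z₄; for 1 ≤ j ≤ n: (2j, 2j−1) = −z₁z₃, (2j, 2j) = z₂z₃; for 1 ≤ j ≤ n−1: (2j+1, 2j−1) = z₁z₄, (2j+1, 2j) = −z₂z₄, (2j+1, 2j+1) = z₁z₄. Then there exists a (2n+1)×(2n+1) matrix Ψ with entries in k[X,Y] such that Φ₆(n)·Ψ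 = Ψ·Φ₆(n) = F·I₂ₙ₊₁. -/
/-!
Group the indices by parity and let `t` be the shift by two places. Away from the first column and
the last row, `Φ₆(n)` is the truncation of the `2 × 2` matrix
`!![z₂z₃, -z₁z₃t; -z₂z₄, z₁z₄(1 + t)]` of polynomials in `t`, whose determinant is `F`;
so `Ψ` is the truncation of its adjugate `!![z₁z₄(1 + t), z₁z₃t; z₂z₄, z₂z₃]`. That the first column
is divided by `z₂` and the last row by `z₃` is compensated by multiplying the first row of `Ψ` by
`z₂` and its last column by `z₃`.
-/

section MatrixFactorization

open scoped Matrix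

theorem mul_eq_smul_one_of_row_vecMul {ι R : Type*} [Fintype ι] [DecidableEq ι] [Semiring R]
    {A B : Matrix ι ι R} {f : R} (h : ∀ i, A.row i ᵥ* B = f • Pi.single i 1) :
    A * B = f • 1 := by
  refine Matrix.ext_row fun i ↦ (h i).trans ?_
  ext j
  rw [Matrix.row_apply, Matrix.smul_apply, Matrix.one_eq_pi_single, Pi.smul_apply]

@[elab_as_elim]
theorem fin_two_mul_add_one_cases {n : ℕ} {P : Fin (2 * n + 1) → Prop} (zero : P ⟨0, by omega⟩)
    (odd : ∀ j (_ : j < n), P ⟨2 * j + 1, by omega⟩)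
    (even : ∀ j (_ : j + 1 < n), P ⟨2 * (j + 1), by omega⟩)
    (last : ∀ j (_ : j + 1 = n), P ⟨2 * (j + 1), by omega⟩) (i : Fin (2 * n + 1)) : P i := by
  obtain ⟨i, hi⟩ := i
  obtain ⟨j, rfl | rfl⟩ := i.even_or_odd'
  · cases j with
    | zero => exact zero
    | succ j =>
      obtain hj | hj : j + 1 < n ∨ j + 1 = n := by omega
      · exact even j hj
      · exact last j hj
  · exact odd j (by omega)

variable {R : Type*} [CommRing R] (z1 z2 z3 z4 : R) (n : ℕ)

/-- The matrix `Φ₆(n)`: its last row is that of `Φ₂(n)⁺` divided by `z₃`, and all other rows are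
those of `Φ₂(n)⁺`. The entries are indexed as in the paper and require `1 ≤ n`: for `n = 0` the
subtraction `2 * n - 1` is truncated. -/
def phiSix : Matrix (Fin (2 * n + 1)) (Fin (2 * n + 1)) R :=
  .of fun i j =>
    if i.val = 2 * n then
      (if j.val = 2 * n - 1 then -z1 else if j.val = 2 * n then z2 else 0)
    else if i.val = 0 then (if j.val = 0 then z3 else 0)
    else if i.val = 1 then
      (if j.val = 0 then -z4 else if j.val = 1 then z1 * z4 else 0)
    else if i.val % 2 = 0 then
      (if j.val = i.val - 1 then -(z1 * z3)
       else if j.val = i.val then z2 * z3 else 0)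
    else
      (if j.val = i.val - 2 then z1 * z4
       else if j.val = i.val - 1 then -(z2 * z4)
       else if j.val = i.val then z1 * z4 else 0)

/-- The matrix complementary to `phiSix` in the matrix factorization of `z₁z₂z₃z₄`, laid out row by
row in the same way. -/
def psiSix : Matrix (Fin (2 * n + 1)) (Fin (2 * n + 1)) R :=
  .of fun i j =>
    if i.val = 0 then (if j.val = 0 then z1 * z2 * z4 else 0)
    else if i.val % 2 = 1 then
      (if j.val = i.val - 1 then z2 * z4 else if j.val = i.val then z2 * z3 else 0)
    else
      (if j.val = i.val - 2 then z1 * z4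
       else if j.val = i.val - 1 then z1 * z3
       else if j.val = i.val then (if i.val = 2 * n then z1 * z3 * z4 else z1 * z4) else 0)

variable {z1 z2 z3 z4 n}

theorem phiSix_row_zero (hn : 1 ≤ n) :
    (phiSix z1 z2 z3 z4 n).row ⟨0, by omega⟩ = z3 • Pi.single ⟨0, by omega⟩ 1 := by
  ext c
  simp only [phiSix, Matrix.row_apply, Matrix.of_apply, Pi.smul_apply, smul_eq_mul, Pi.single_apply,
    Fin.ext_iff]
  grind

theorem phiSix_row_one (hn : 1 ≤ n) :
    (phiSix z1 z2 z3 z4 n).row ⟨1, by omega⟩ =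
      -z4 • Pi.single ⟨0, by omega⟩ 1 + (z1 * z4) • Pi.single ⟨1, by omega⟩ 1 := by
  ext c
  simp only [phiSix, Matrix.row_apply, Matrix.of_apply, Pi.add_apply, Pi.smul_apply, smul_eq_mul,
    Pi.single_apply, Fin.ext_iff]
  grind

theorem phiSix_row_even {j : ℕ} (hj : j + 1 < n) :
    (phiSix z1 z2 z3 z4 n).row ⟨2 * (j + 1), by omega⟩ =
      -(z1 * z3) • Pi.single ⟨2 * j + 1, by omega⟩ 1 +
        (z2 * z3) • Pi.single ⟨2 * (j + 1), by omega⟩ 1 := by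
  ext c
  simp only [phiSix, Matrix.row_apply, Matrix.of_apply, Pi.add_apply, Pi.smul_apply, smul_eq_mul,
    Pi.single_apply, Fin.ext_iff]
  grind

theorem phiSix_row_odd {j : ℕ} (hj : j + 1 < n) :
    (phiSix z1 z2 z3 z4 n).row ⟨2 * (j + 1) + 1, by omega⟩ =
      (z1 * z4) • Pi.single ⟨2 * j + 1, by omega⟩ 1 -
        (z2 * z4) • Pi.single ⟨2 * (j + 1), by omega⟩ 1 +
        (z1 * z4) • Pi.single ⟨2 * (j + 1) + 1, by omega⟩ 1 := by
  ext c
  simp only [phiSix, Matrix.row_apply, Matrix.of_apply, Pi.add_apply, Pi.sub_apply, Pi.smul_apply,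
    smul_eq_mul, Pi.single_apply, Fin.ext_iff]
  grind

theorem phiSix_row_last {j : ℕ} (hj : j + 1 = n) :
    (phiSix z1 z2 z3 z4 n).row ⟨2 * (j + 1), by omega⟩ =
      -z1 • Pi.single ⟨2 * j + 1, by omega⟩ 1 + z2 • Pi.single ⟨2 * (j + 1), by omega⟩ 1 := by
  ext c
  simp only [phiSix, Matrix.row_apply, Matrix.of_apply, Pi.add_apply, Pi.smul_apply, smul_eq_mul,
    Pi.single_apply, Fin.ext_iff]
  grind

theorem psiSix_row_zero :
    (psiSix z1 z2 z3 z4 n).row ⟨0, by omega⟩ = (z1 * z2 * z4) • Pi.single ⟨0, by omega⟩ 1 := by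
  ext c
  simp only [psiSix, Matrix.row_apply, Matrix.of_apply, Pi.smul_apply, smul_eq_mul, Pi.single_apply,
    Fin.ext_iff]
  grind

theorem psiSix_row_odd {j : ℕ} (hj : j < n) :
    (psiSix z1 z2 z3 z4 n).row ⟨2 * j + 1, by omega⟩ =
      (z2 * z4) • Pi.single ⟨2 * j, by omega⟩ 1 +
        (z2 * z3) • Pi.single ⟨2 * j + 1, by omega⟩ 1 := by
  ext c
  simp only [psiSix, Matrix.row_apply, Matrix.of_apply, Pi.add_apply, Pi.smul_apply, smul_eq_mul,
    Pi.single_apply, Fin.ext_iff]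
  grind

theorem psiSix_row_even {j : ℕ} (hj : j + 1 < n) :
    (psiSix z1 z2 z3 z4 n).row ⟨2 * (j + 1), by omega⟩ =
      (z1 * z4) • Pi.single ⟨2 * j, by omega⟩ 1 +
        (z1 * z3) • Pi.single ⟨2 * j + 1, by omega⟩ 1 +
        (z1 * z4) • Pi.single ⟨2 * (j + 1), by omega⟩ 1 := by
  ext c
  simp only [psiSix, Matrix.row_apply, Matrix.of_apply, Pi.add_apply, Pi.smul_apply, smul_eq_mul,
    Pi.single_apply, Fin.ext_iff]
  grind

theorem psiSix_row_last {j : ℕ} (hj : j + 1 = n) :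
    (psiSix z1 z2 z3 z4 n).row ⟨2 * (j + 1), by omega⟩ =
      (z1 * z4) • Pi.single ⟨2 * j, by omega⟩ 1 +
        (z1 * z3) • Pi.single ⟨2 * j + 1, by omega⟩ 1 +
        (z1 * z3 * z4) • Pi.single ⟨2 * (j + 1), by omega⟩ 1 := by
  ext c
  simp only [psiSix, Matrix.row_apply, Matrix.of_apply, Pi.add_apply, Pi.smul_apply, smul_eq_mul,
    Pi.single_apply, Fin.ext_iff]
  grind

variable (z1 z2 z3 z4) in
theorem smul_phiSix_row_even_add_smul_phiSix_row_odd {j : ℕ} (hj : j < n) :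
    z4 • (phiSix z1 z2 z3 z4 n).row ⟨2 * j, by omega⟩ +
        z3 • (phiSix z1 z2 z3 z4 n).row ⟨2 * j + 1, by omega⟩ =
      (z1 * z3 * z4) • Pi.single ⟨2 * j + 1, by omega⟩ 1 := by
  cases j with
  | zero =>
    simp only [Nat.mul_zero, Nat.zero_add, phiSix_row_zero hj, phiSix_row_one hj]
    module
  | succ j =>
    simp only [phiSix_row_even hj, phiSix_row_odd hj]
    module

theorem phiSix_mul_psiSix (hn : 1 ≤ n) :
    phiSix z1 z2 z3 z4 n * psiSix z1 z2 z3 z4 n = (z1 * z2 * z3 * z4) • 1 := by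
  refine mul_eq_smul_one_of_row_vecMul fun i ↦ ?_
  cases i using fin_two_mul_add_one_cases with
  | zero =>
    simp only [phiSix_row_zero hn, psiSix_row_zero, Matrix.smul_vecMul, Matrix.single_one_vecMul]
    module
  | odd j hj =>
    cases j with
    | zero =>
      have psiSix_row_one : (psiSix z1 z2 z3 z4 n).row ⟨1, by omega⟩ =
          (z2 * z4) • Pi.single ⟨0, by omega⟩ 1 + (z2 * z3) • Pi.single ⟨1, by omega⟩ 1 :=
        psiSix_row_odd hj
      simp only [Nat.mul_zero, Nat.zero_add]
      simp only [phiSix_row_one hn, psiSix_row_zero, psiSix_row_one, Matrix.add_vecMul,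
        Matrix.smul_vecMul, Matrix.single_one_vecMul]
      module
    | succ j =>
      simp only [phiSix_row_odd hj, psiSix_row_odd (Nat.lt_of_succ_lt hj), psiSix_row_even hj,
        psiSix_row_odd hj, Matrix.add_vecMul, Matrix.sub_vecMul, Matrix.smul_vecMul,
        Matrix.single_one_vecMul]
      module
  | even j hj =>
    simp only [phiSix_row_even hj, psiSix_row_odd (Nat.lt_of_succ_lt hj), psiSix_row_even hj,
      Matrix.add_vecMul, Matrix.smul_vecMul, Matrix.single_one_vecMul]
    module
  | last j hj =>
    simp only [phiSix_row_last hj, psiSix_row_odd hj.le, psiSix_row_last hj, Matrix.add_vecMul,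
      Matrix.smul_vecMul, Matrix.single_one_vecMul]
    module

theorem psiSix_mul_phiSix (hn : 1 ≤ n) :
    psiSix z1 z2 z3 z4 n * phiSix z1 z2 z3 z4 n = (z1 * z2 * z3 * z4) • 1 := by
  refine mul_eq_smul_one_of_row_vecMul fun i ↦ ?_
  cases i using fin_two_mul_add_one_cases with
  | zero =>
    simp only [psiSix_row_zero, phiSix_row_zero hn, Matrix.smul_vecMul, Matrix.single_one_vecMul]
    module
  | odd j hj =>
    simp only [psiSix_row_odd hj, Matrix.add_vecMul, Matrix.smul_vecMul, Matrix.single_one_vecMul]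
    linear_combination (norm := module)
      z2 • smul_phiSix_row_even_add_smul_phiSix_row_odd z1 z2 z3 z4 hj
  | even j hj =>
    simp only [psiSix_row_even hj, phiSix_row_even hj, Matrix.add_vecMul, Matrix.smul_vecMul,
      Matrix.single_one_vecMul]
    linear_combination (norm := module)
      z1 • smul_phiSix_row_even_add_smul_phiSix_row_odd z1 z2 z3 z4 (Nat.lt_of_succ_lt hj)
  | last j hj =>
    simp only [psiSix_row_last hj, phiSix_row_last hj, Matrix.add_vecMul, Matrix.smul_vecMul,
      Matrix.single_one_vecMul]
    linear_combination (norm := module)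
      z1 • smul_phiSix_row_even_add_smul_phiSix_row_odd z1 z2 z3 z4 hj.le

theorem stmt_17_general (hn : 1 ≤ n) :
    ∃ Ψ : Matrix (Fin (2 * n + 1)) (Fin (2 * n + 1)) R,
      phiSix z1 z2 z3 z4 n * Ψ = (z1 * z2 * z3 * z4) • 1 ∧
      Ψ * phiSix z1 z2 z3 z4 n = (z1 * z2 * z3 * z4) • 1 :=
  ⟨psiSix z1 z2 z3 z4 n, phiSix_mul_psiSix hn, psiSix_mul_phiSix hn⟩

end MatrixFactorization

/-- For `n ≥ 1`, the matrix `Φ₆(n)`, obtained from `Φ₂(n)⁺` by dividing the last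
row `(0,…,0,−z₁z₃,z₂z₃)` by `z₃` (so it becomes `(0,…,0,−z₁,z₂)`), is part of a
matrix factorization of `F`. -/
theorem stmt_17 {k : Type*} [Field k] (lam : k) (h0 : lam ≠ 0) (h1 : lam ≠ 1)
    (z1 z2 z3 z4 F : MvPolynomial (Fin 2) k)
    (hz1 : z1 = MvPolynomial.X 1) (hz2 : z2 = MvPolynomial.X 0)
    (hz3 : z3 = MvPolynomial.X 0 - MvPolynomial.X 1)
    (hz4 : z4 = MvPolynomial.X 0 - MvPolynomial.C lam * MvPolynomial.X 1)
    (hF : F = z1 * z2 * z3 * z4)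
    (n : ℕ) (hn : 1 ≤ n)
    (Φ₂ Φ₆ : Matrix (Fin (2 * n + 1)) (Fin (2 * n + 1)) (MvPolynomial (Fin 2) k))
    (hΦ₂ : ∀ i j : Fin (2 * n + 1), Φ₂ i j =
      if i.val = 0 then (if j.val = 0 then z3 else 0)
      else if i.val = 1 then
        (if j.val = 0 then -z4 else if j.val = 1 then z1 * z4 else 0)
      else if i.val % 2 = 0 then
        (if j.val = i.val - 1 then -(z1 * z3)
         else if j.val = i.val then z2 * z3 else 0)
      else
        (if j.val = i.val - 2 then z1 * z4
         else if j.val = i.val - 1 then -(z2 * z4)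
         else if j.val = i.val then z1 * z4 else 0))
    (hΦ₆ : ∀ i j : Fin (2 * n + 1), Φ₆ i j =
      if i.val = 2 * n then
        (if j.val = 2 * n - 1 then -z1 else if j.val = 2 * n then z2 else 0)
      else Φ₂ i j) :
    ∃ Ψ : Matrix (Fin (2 * n + 1)) (Fin (2 * n + 1)) (MvPolynomial (Fin 2) k),
      Φ₆ * Ψ = F • (1 : Matrix (Fin (2 * n + 1)) (Fin (2 * n + 1)) (MvPolynomial (Fin 2) k)) ∧
      Ψ * Φ₆ = F • (1 : Matrix (Fin (2 * n + 1)) (Fin (2 * n + 1)) (MvPolynomial (Fin 2) k)) := by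
  have hΦ : Φ₆ = phiSix z1 z2 z3 z4 n := by ext i j; simp only [hΦ₆, hΦ₂]; rfl
  exact hF ▸ hΦ ▸ stmt_17_general hn
end
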